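/- arXiv:1708.07639 — 3 statements merged into one kernel-verified Lean document; each statement's English description precedes it below -/
import Mathlib

section
/- The operator 𝒜 is maximal: for every (φ, ψ) ∈ V × H there exists (u, v) ∈ V × V such that u − v = φ and A u + g(v) + ι(j v) = ι(ψ) in V′ (in particular A u + g(v) ∈ ι(H), so (u,v) ∈ D(𝒜) and 𝒜(u,v) + (u,v) = (φ, ψ)). Equivalently, the continuous coercive monotone operator 𝒞 : V → V′, 𝒞 v = A v + g(v) + ι(j v), is surjective. -/
open scoped RealInnerProductSpace
open Set

/-! Writing `R : V′ → V` for the Riesz isometry, monotonicity of `T : V → V′` says exactly that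
the Cayley transform `w + R (T w) ↦ w - R (T w)` is nonexpansive. By Kirszbraun's one-point
extension it can be defined at any further point `R f`, and reading this backwards gives `x` with
`⟨f - A x - T w, x - w⟩ ≥ 0` for all `w`. Minty's trick (let `w → x` along a line) turns this into
`A x + T x = f`. Take `T v = g v + ι (j v)`, `f = ι ψ - A φ`, `v = x` and `u = φ + x`.

By weak compactness of balls, Kirszbraun's extension reduces to finitely many points. There the
minimax theorem reduces it to bounding weighted averages of squared distances, and the weighted
average of the squared distances to the barycenter depends only on the mutual distances.
-/

section WeightedSums

variable {I E : Type*} [Fintype I] [SeminormedAddCommGroup E] [InnerProductSpace ℝ E]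

lemma sum_mul_norm_sub_sq_eq_add_norm_sq {l : I → ℝ} (hl : ∑ i, l i = 1)
    (p : I → E) (a : E) :
    ∑ i, l i * ‖p i - a‖ ^ 2 =
      ∑ i, l i * ‖p i - ∑ k, l k • p k‖ ^ 2 + ‖∑ k, l k • p k - a‖ ^ 2 := by
  set m := ∑ k, l k • p k with hm
  have centered : ∑ i, l i • (p i - m) = 0 := by
    simp only [smul_sub, Finset.sum_sub_distrib, ← Finset.sum_smul, hl, one_smul, hm, sub_self]
  have cross : ∑ i, l i * ⟪p i - m, m - a⟫ = 0 := by
    simp only [← real_inner_smul_left, ← sum_inner, centered, inner_zero_left]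
  calc ∑ i, l i * ‖p i - a‖ ^ 2
      = ∑ i, (l i * ‖p i - m‖ ^ 2 + 2 * (l i * ⟪p i - m, m - a⟫) + l i * ‖m - a‖ ^ 2) := by
        refine Finset.sum_congr rfl fun i _ ↦ ?_
        rw [← sub_add_sub_cancel (p i) m a, norm_add_sq_real]
        ring
    _ = ∑ i, l i * ‖p i - m‖ ^ 2 + ‖m - a‖ ^ 2 := by
        rw [Finset.sum_add_distrib, Finset.sum_add_distrib, ← Finset.mul_sum, cross,
          ← Finset.sum_mul, hl, mul_zero, add_zero, one_mul]

lemma sum_sum_mul_norm_sub_sq {l : I → ℝ} (hl : ∑ i, l i = 1) (p : I → E) :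
    ∑ k, l k * ∑ i, l i * ‖p i - p k‖ ^ 2 = 2 * ∑ i, l i * ‖p i - ∑ k, l k • p k‖ ^ 2 := by
  simp only [sum_mul_norm_sub_sq_eq_add_norm_sq hl p (p _), mul_add,
    Finset.sum_add_distrib, ← Finset.sum_mul, hl, norm_sub_rev (∑ k, l k • p k)]
  ring

end WeightedSums

section Minimax

variable {I X : Type*} [Fintype I] [Nonempty I] [TopologicalSpace X] [AddCommGroup X]
  [Module ℝ X] [IsTopologicalAddGroup X] [ContinuousSMul ℝ X]

lemma exists_forall_nonpos_of_forall_stdSimplex {K : Set X} {f : I → X → ℝ} (hK : IsCompact K)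
    (hconv : ∀ i, ConvexOn ℝ K (f i)) (hlsc : ∀ i, LowerSemicontinuousOn (f i) K)
    (h : ∀ l ∈ stdSimplex ℝ I, ∃ x ∈ K, ∑ i, l i * f i x ≤ 0) :
    ∃ x ∈ K, ∀ i, f i x ≤ 0 := by
  classical
  have simplex_nonempty : (stdSimplex ℝ I).Nonempty :=
    ⟨_, single_mem_stdSimplex ℝ (Classical.arbitrary I)⟩
  have K_nonempty : K.Nonempty :=
    let ⟨_, hl⟩ := simplex_nonempty
    let ⟨x, hx, _⟩ := h _ hl
    ⟨x, hx⟩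
  have convexOn_sum : ∀ l ∈ stdSimplex ℝ I, ConvexOn ℝ K fun x ↦ ∑ i, l i * f i x := fun l hl ↦ by
    simpa only [Finset.sum_fn] using Finset.univ.sum_induction (fun i x ↦ l i * f i x)
      (ConvexOn ℝ K) (fun _ _ ↦ ConvexOn.add)
      (convexOn_const 0 (hconv (Classical.arbitrary I)).1) fun i _ ↦ (hconv i).smul (hl.1 i)
  have lsc_sum : ∀ l ∈ stdSimplex ℝ I,
      LowerSemicontinuousOn (fun x ↦ ∑ i, l i * f i x) K := fun l hl ↦
    lowerSemicontinuousOn_sum fun i _ ↦ (continuous_const_mul (l i)).comp_lowerSemicontinuousOn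
      (hlsc i) (monotone_mul_left_of_nonneg (hl.1 i))
  have concaveOn_sum (x : X) : ConcaveOn ℝ (stdSimplex ℝ I) fun l ↦ ∑ i, l i * f i x :=
    (Fintype.linearCombination ℝ (f · x)).concaveOn (convex_stdSimplex ℝ I)
  obtain ⟨x, hx, l, hl, saddle⟩ := Sion.exists_isSaddlePointOn K_nonempty
    (hconv (Classical.arbitrary I)).1 hK lsc_sum
    (fun l hl ↦ (convexOn_sum l hl).quasiconvexOn) (convex_stdSimplex ℝ I) simplex_nonempty
    (isCompact_stdSimplex ℝ I)
    (fun x _ ↦ (Continuous.upperSemicontinuous (by fun_prop)).upperSemicontinuousOn _)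
    (fun x _ ↦ (concaveOn_sum x).quasiconcaveOn)
  obtain ⟨y, hy, sum_nonpos⟩ := h l hl
  refine ⟨x, hx, fun i ↦ ?_⟩
  calc f i x = ∑ k, (Pi.single i 1 : I → ℝ) k * f k x := by simp [Pi.single_apply]
    _ ≤ ∑ k, l k * f k y := saddle y hy _ (single_mem_stdSimplex ℝ i)
    _ ≤ 0 := sum_nonpos

end Minimax

section KirszbraunFinite

variable {I E F : Type*} [SeminormedAddCommGroup E] [InnerProductSpace ℝ E]
  [SeminormedAddCommGroup F] [InnerProductSpace ℝ F]

lemma sum_mul_norm_sub_sum_smul_sq_le [Fintype I] {l : I → ℝ} (hl : l ∈ stdSimplex ℝ I)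
    {p : I → E} {q : I → F} (hpq : ∀ i k, ‖q i - q k‖ ≤ ‖p i - p k‖) (p₀ : E) :
    ∑ i, l i * ‖q i - ∑ k, l k • q k‖ ^ 2 ≤ ∑ i, l i * ‖p i - p₀‖ ^ 2 := by
  have pairwise_le : ∑ k, l k * ∑ i, l i * ‖q i - q k‖ ^ 2 ≤
      ∑ k, l k * ∑ i, l i * ‖p i - p k‖ ^ 2 := by
    gcongr with k _ i _
    · exact hl.1 k
    · exact hl.1 i
    · exact hpq i k
  rw [sum_sum_mul_norm_sub_sq hl.2, sum_sum_mul_norm_sub_sq hl.2] at pairwise_le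
  rw [sum_mul_norm_sub_sq_eq_add_norm_sq hl.2 p p₀]
  linarith [sq_nonneg ‖∑ k, l k • p k - p₀‖]

theorem exists_norm_sub_le_of_forall_norm_sub_le_of_finite [Finite I] {p : I → E} {q : I → F}
    (hpq : ∀ i k, ‖q i - q k‖ ≤ ‖p i - p k‖) (p₀ : E) :
    ∃ q₀ : F, ∀ i, ‖q i - q₀‖ ≤ ‖p i - p₀‖ := by
  have := Fintype.ofFinite I
  cases isEmpty_or_nonempty I
  · exact ⟨0, isEmptyElim⟩
  let K := convexHull ℝ (range q)
  have convex_K : Convex ℝ K := convex_convexHull ℝ _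
  have sum_smul_mem {l : I → ℝ} (hl : l ∈ stdSimplex ℝ I) : ∑ k, l k • q k ∈ K :=
    convex_K.sum_mem (fun i _ ↦ hl.1 i) hl.2 fun i _ ↦ subset_convexHull ℝ _ (mem_range_self i)
  have convexOn (i : I) : ConvexOn ℝ K fun y ↦ ‖q i - y‖ ^ 2 - ‖p i - p₀‖ ^ 2 := by
    simp only [← dist_eq_norm, dist_comm (q i)]
    exact ((convexOn_dist (q i) convex_K).pow (fun _ _ ↦ dist_nonneg) 2).add_const _
  obtain ⟨q₀, -, hq₀⟩ := exists_forall_nonpos_of_forall_stdSimplex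
    ((finite_range q).isCompact_convexHull ℝ) convexOn
    (fun i ↦ (Continuous.lowerSemicontinuous (by fun_prop)).lowerSemicontinuousOn K)
    fun l hl ↦ ⟨∑ k, l k • q k, sum_smul_mem hl, by
      simpa only [mul_sub, Finset.sum_sub_distrib, sub_nonpos]
        using sum_mul_norm_sub_sum_smul_sq_le hl hpq p₀⟩
  exact ⟨q₀, fun i ↦ (sq_le_sq₀ (norm_nonneg _) (norm_nonneg _)).1 (sub_nonpos.1 (hq₀ i))⟩

end KirszbraunFinite

section Kirszbraun

open Metric

variable {I E F : Type*} [SeminormedAddCommGroup E] [InnerProductSpace ℝ E]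
  [NormedAddCommGroup F] [InnerProductSpace ℝ F] [CompleteSpace F]

lemma iInter_closedBall_nonempty_of_finset (c : I → F) (r : I → ℝ)
    (h : ∀ s : Finset I, (⋂ i ∈ s, closedBall (c i) (r i)).Nonempty) :
    (⋂ i, closedBall (c i) (r i)).Nonempty := by
  classical
  rcases isEmpty_or_nonempty I with _ | ⟨⟨i₀⟩⟩
  · simp
  let D := InnerProductSpace.toDual ℝ F
  let C : I → Set (WeakDual ℝ F) := fun i ↦
    WeakDual.toStrongDual ⁻¹' closedBall (D (c i)) (r i)
  have mem_C (i : I) (y : F) :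
      StrongDual.toWeakDual (D y) ∈ C i ↔ y ∈ closedBall (c i) (r i) := by
    change D y ∈ closedBall (D (c i)) (r i) ↔ _
    rw [mem_closedBall, mem_closedBall, D.dist_map]
  obtain ⟨z, -, hz⟩ := (WeakDual.isCompact_closedBall (D (c i₀)) (r i₀)).inter_iInter_nonempty C
    (fun i ↦ WeakDual.isClosed_closedBall _ _) fun s ↦ by
      obtain ⟨y, hy⟩ := h (insert i₀ s)
      simp only [Finset.mem_insert, iInter_iInter_eq_or_left, mem_inter_iff, mem_iInter] at hy
      exact ⟨StrongDual.toWeakDual (D y), (mem_C i₀ y).2 hy.1,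
        mem_iInter₂.2 fun i hi ↦ (mem_C i y).2 (hy.2 i hi)⟩
  refine ⟨D.symm (WeakDual.toStrongDual z), mem_iInter.2 fun i ↦ ?_⟩
  rw [← mem_C, D.apply_symm_apply]
  exact mem_iInter.1 hz i

theorem exists_norm_sub_le_of_forall_norm_sub_le {p : I → E} {q : I → F}
    (hpq : ∀ i k, ‖q i - q k‖ ≤ ‖p i - p k‖) (p₀ : E) :
    ∃ q₀ : F, ∀ i, ‖q i - q₀‖ ≤ ‖p i - p₀‖ := by
  obtain ⟨q₀, hq₀⟩ := iInter_closedBall_nonempty_of_finset q (fun i ↦ ‖p i - p₀‖) fun s ↦ by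
    obtain ⟨y, hy⟩ := exists_norm_sub_le_of_forall_norm_sub_le_of_finite (fun i k : s ↦ hpq i k) p₀
    exact ⟨y, mem_iInter₂.2 fun i hi ↦ mem_closedBall_iff_norm'.2 (hy ⟨i, hi⟩)⟩
  exact ⟨q₀, fun i ↦ mem_closedBall_iff_norm'.1 (mem_iInter.1 hq₀ i)⟩

end Kirszbraun

section MonotoneOperator

variable {V : Type*} [TopologicalSpace V] [AddCommGroup V] [Module ℝ V]

/-- Monotonicity in the sense of Minty and Browder of an everywhere defined, single-valued,
possibly nonlinear operator from a space to its dual. -/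
def MonotoneOperator (T : V → StrongDual ℝ V) : Prop :=
  ∀ v w, 0 ≤ (T v - T w) (v - w)

/-- Continuity of `t ↦ ⟨T (x + t y), y⟩` along every line: the weak form of continuity under which
a monotone operator is maximal monotone. -/
def RadiallyContinuous (T : V → StrongDual ℝ V) : Prop :=
  ∀ x y, Continuous fun t : ℝ ↦ T (x + t • y) y

lemma MonotoneOperator.add {S T : V → StrongDual ℝ V} (hS : MonotoneOperator S)
    (hT : MonotoneOperator T) : MonotoneOperator (S + T) := fun v w ↦ by
  rw [Pi.add_apply, Pi.add_apply, add_sub_add_comm]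
  exact add_nonneg (hS v w) (hT v w)

lemma RadiallyContinuous.add {S T : V → StrongDual ℝ V} (hS : RadiallyContinuous S)
    (hT : RadiallyContinuous T) : RadiallyContinuous (S + T) := fun x y ↦
  (hS x y).add (hT x y)

lemma radiallyContinuous_of_continuous [ContinuousAdd V] [ContinuousSMul ℝ V]
    {T : V → StrongDual ℝ V} (hT : Continuous T) : RadiallyContinuous T := fun x y ↦
  (continuous_eval_const y).comp (hT.comp (by fun_prop))

open Filter Topology in
lemma RadiallyContinuous.eq_of_forall_apply_sub_nonneg {T : V → StrongDual ℝ V}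
    (hT : RadiallyContinuous T) {x : V} {f : StrongDual ℝ V}
    (h : ∀ w, 0 ≤ (f - T w) (x - w)) : T x = f := by
  have le_apply (y : V) : f y ≤ T x y := by
    have le_of_pos : ∀ t ∈ Ioi (0 : ℝ), f y ≤ T (x + t • y) y := fun t ht ↦ by
      have mul_nonpos := h (x + t • y)
      rw [sub_add_cancel_left, map_neg, map_smul, smul_eq_mul, neg_nonneg] at mul_nonpos
      exact sub_nonpos.1 (nonpos_of_mul_nonpos_right mul_nonpos ht)
    have tendsto : Tendsto (fun t : ℝ ↦ T (x + t • y) y) (𝓝[>] 0) (𝓝 (T x y)) := by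
      simpa using (hT x y).continuousWithinAt (s := Ioi 0) (x := 0) |>.tendsto
    exact ge_of_tendsto tendsto (eventually_mem_nhdsWithin.mono le_of_pos)
  ext y
  have le_neg := le_apply (-y)
  rw [map_neg, map_neg, neg_le_neg_iff] at le_neg
  exact le_antisymm le_neg (le_apply y)

end MonotoneOperator

section BrowderMinty

open InnerProductSpace

variable {V : Type*}

lemma norm_sub_le_norm_add_iff_inner_nonneg [SeminormedAddCommGroup V]
    [InnerProductSpace ℝ V] (a b : V) : ‖a - b‖ ≤ ‖a + b‖ ↔ 0 ≤ ⟪a, b⟫ := by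
  rw [← sq_le_sq₀ (norm_nonneg _) (norm_nonneg _), norm_sub_sq_real, norm_add_sq_real]
  constructor <;> intro h <;> linarith

variable [NormedAddCommGroup V] [InnerProductSpace ℝ V] [CompleteSpace V]

theorem MonotoneOperator.exists_forall_apply_sub_nonneg {T : V → StrongDual ℝ V}
    (hT : MonotoneOperator T) (f : StrongDual ℝ V) :
    ∃ x, ∀ w, 0 ≤ (f - toDual ℝ V x - T w) (x - w) := by
  let b : V → V := fun w ↦ (toDual ℝ V).symm (T w)
  let p₀ := (toDual ℝ V).symm f
  have cayley_nonexpansive (v w : V) :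
      ‖(v - b v) - (w - b w)‖ ≤ ‖(v + b v) - (w + b w)‖ := by
    rw [sub_sub_sub_comm, add_sub_add_comm, norm_sub_le_norm_add_iff_inner_nonneg,
      real_inner_comm]
    simpa [b, ← map_sub, toDual_symm_apply] using hT v w
  obtain ⟨q₀, hq₀⟩ := exists_norm_sub_le_of_forall_norm_sub_le cayley_nonexpansive p₀
  let x := (2⁻¹ : ℝ) • (p₀ + q₀)
  let y := (2⁻¹ : ℝ) • (p₀ - q₀)
  have add_eq : x + y = p₀ := by module
  have sub_eq : x - y = q₀ := by module
  have f_eq : f = toDual ℝ V (x + y) := by rw [add_eq, LinearIsometryEquiv.apply_symm_apply]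
  refine ⟨x, fun w ↦ ?_⟩
  have inner_nonneg := hq₀ w
  rw [← add_eq, ← sub_eq, sub_sub_sub_comm, add_sub_add_comm,
    norm_sub_le_norm_add_iff_inner_nonneg, ← neg_sub x, ← neg_sub y, inner_neg_neg,
    real_inner_comm] at inner_nonneg
  simpa [f_eq, b, inner_sub_left, toDual_symm_apply] using inner_nonneg

theorem MonotoneOperator.exists_toDual_add_eq {T : V → StrongDual ℝ V} (hT : MonotoneOperator T)
    (hT' : RadiallyContinuous T) (f : StrongDual ℝ V) : ∃ x, toDual ℝ V x + T x = f := by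
  obtain ⟨x, hx⟩ := hT.exists_forall_apply_sub_nonneg f
  exact ⟨x, by rw [hT'.eq_of_forall_apply_sub_nonneg hx, add_sub_cancel]⟩

end BrowderMinty

theorem stmt_1_general
    {V H : Type*}
    [NormedAddCommGroup V] [InnerProductSpace ℝ V] [CompleteSpace V]
    [SeminormedAddCommGroup H] [InnerProductSpace ℝ H]
    (j : V →L[ℝ] H)
    (ι : H → StrongDual ℝ V) (hι : ∀ (w : H) (v : V), ι w v = ⟪w, j v⟫)
    (A : V → StrongDual ℝ V) (hA : ∀ u v : V, A u v = ⟪u, v⟫)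
    (g : V → StrongDual ℝ V) (hg_cont : RadiallyContinuous g)
    (hg_mono : MonotoneOperator g) (φ : V) (f : StrongDual ℝ V) :
    ∃ u v : V, u - v = φ ∧ A u + g v + ι (j v) = f := by
  have ιj_mono : MonotoneOperator fun v ↦ ι (j v) := fun v w ↦ by
    simp only [sub_apply, hι, ← inner_sub_left, ← map_sub]
    exact real_inner_self_nonneg
  have ιj_cont : RadiallyContinuous fun v ↦ ι (j v) := fun x y ↦ by
    simp only [hι]
    fun_prop
  obtain ⟨v, hv⟩ := (hg_mono.add ιj_mono).exists_toDual_add_eq (hg_cont.add ιj_cont) (f - A φ)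
  refine ⟨φ + v, v, add_sub_cancel_right φ v, ?_⟩
  have A_add : A (φ + v) = A φ + InnerProductSpace.toDual ℝ V v := by
    ext z
    simp only [hA, add_apply, inner_add_left, InnerProductSpace.toDual_apply_apply]
  rw [A_add, add_assoc, add_assoc, ← eq_sub_iff_add_eq', ← hv]
  rfl

/-- Maximality of the operator 𝒜: the operator
`𝒞 v = A v + g v + ι (j v)` is surjective, i.e. for every `(φ, ψ) ∈ V × H`
there is `(u, v)` with `u - v = φ` and `A u + g v + ι (j v) = ι ψ`. -/
theorem stmt_1
    {V H : Type*}
    [NormedAddCommGroup V] [InnerProductSpace ℝ V] [CompleteSpace V]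
    [NormedAddCommGroup H] [InnerProductSpace ℝ H] [CompleteSpace H]
    (j : V →L[ℝ] H) (hj_inj : Function.Injective j) (hj_dense : DenseRange j)
    (ι : H → (V →L[ℝ] ℝ)) (hι : ∀ (w : H) (v : V), ι w v = ⟪w, j v⟫)
    (A : V → (V →L[ℝ] ℝ)) (hA : ∀ u v : V, A u v = ⟪u, v⟫)
    (g : V → (V →L[ℝ] ℝ)) (hg_cont : Continuous g)
    (hg_mono : ∀ v w : V, (g v - g w) (v - w) ≥ 0) :
    ∀ (φ : V) (ψ : H), ∃ u v : V,
      u - v = φ ∧ A u + g v + ι (j v) = ι ψ := by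
  intro φ ψ
  exact stmt_1_general j ι hι A hA g (radiallyContinuous_of_continuous hg_cont) hg_mono φ (ι ψ)
end

section
/- Let α ≥ 0 and assume (P1): there exist γ > 0 and C₁ ≥ 0 such that ⟨g(v), v⟩ ≥ γ ‖e v‖_Z^{α+2} − C₁ for all v ∈ V; and (P2): there exist K > 0 and C₂ ≥ 0 such that ‖g(v)‖_{V′} ≤ C₂ + K ‖e v‖_Z^{α+1} for all v ∈ V. Then there exists a constant K′ > 0, depending only on V, H, Z, j, e, f, A, g, α and the constants γ, C₁, C₂, K (in particular independent of h and of the solution), such that for every continuous h : [0,∞) → H with ‖h‖_{S²} < ∞ and every strong solution u of ü + A u + g(u̇) = h, one has limsup_{t→∞} (|j u̇(t)|_H² + ‖u(t)‖_V²) ≤ K′ (1 + ‖h‖_{S²}²). -/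
open scoped RealInnerProductSpace
open Set Filter MeasureTheory intervalIntegral

/-!
Let `E = (|j u̇|² + ‖u‖²) / 2`, let `P = (j u̇, j u)_H`, let `z = ‖e u̇‖_Z` and let
`m² = 1 + ‖h‖_{S²}²`. On a window of fixed length `T ≥ ‖j‖ + 1` the energy grows by `O(m²)` at most.
Suppose that it drops by at most `1`. Then the energy balance and (P1) bound the dissipation
`∫ z ^ (α + 2)`, and an interpolation with a weight depending on `m` gives `∫ z² = O(m²)` and
`∫ z ^ (α + 1) = O(m)`. As `‖u‖ ≤ B := √(2 (E + O(m²)))` on the window, integrating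
`P' ≤ 2 |j u̇|² - 2 E + (‖g(u̇)‖ + ‖j‖ |h|) ‖u‖` with (P2) yields
`2 T E ≤ 2 ‖j‖ E + O(m²) + O(m) B`, and since `T ≥ ‖j‖ + 1` this forces `E = O(m²)`. So the energy
drops by `1` over each window until it is `O(m²)`, and it remains of this order afterwards.
-/

theorem rpow_mul_rpow_le_rpow_add_add_rpow_add {x y p q : ℝ} (hx : 0 ≤ x) (hy : 0 ≤ y)
    (hp : 0 ≤ p) (hq : 0 ≤ q) : x ^ p * y ^ q ≤ x ^ (p + q) + y ^ (p + q) := by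
  rw [Real.rpow_add_of_nonneg hx hp hq, Real.rpow_add_of_nonneg hy hp hq]
  have hxp := Real.rpow_nonneg hx p
  have hyq := Real.rpow_nonneg hy q
  rcases le_total x y with hxy | hyx
  · have : x ^ p * y ^ q ≤ y ^ p * y ^ q := by gcongr
    have := Real.rpow_nonneg hx q
    nlinarith
  · have : x ^ p * y ^ q ≤ x ^ p * x ^ q := by gcongr
    have := Real.rpow_nonneg hy p
    nlinarith

theorem mul_le_sq_div_add_mul_sq {x y w : ℝ} (hw : 0 < w) :
    x * y ≤ x ^ 2 / (2 * w) + w * y ^ 2 / 2 := by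
  have square : x ^ 2 / (2 * w) + w * y ^ 2 / 2 - x * y = (x - w * y) ^ 2 / (2 * w) := by
    field_simp
    ring
  have : 0 ≤ (x - w * y) ^ 2 / (2 * w) := by positivity
  linarith

theorem integral_add_natCast_le_natCast_mul {φ : ℝ → ℝ} {M : ℝ} (hφ : ContinuousOn φ (Ici 0))
    (hM : ∀ t, 0 ≤ t → ∫ s in t..(t + 1), φ s ≤ M) (N : ℕ) {t : ℝ} (ht : 0 ≤ t) :
    ∫ s in t..(t + N), φ s ≤ N * M := by
  have integrable {a b : ℝ} (ha : 0 ≤ a) (hab : a ≤ b) : IntervalIntegrable φ volume a b :=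
    (hφ.mono fun _ hs => ha.trans hs.1).intervalIntegrable_of_Icc hab
  induction N with
  | zero => simp
  | succ n ih =>
    have hn : (0 : ℝ) ≤ n := n.cast_nonneg
    have split := integral_add_adjacent_intervals (integrable ht (le_add_of_nonneg_right hn))
      (integrable (add_nonneg ht hn) (le_add_of_nonneg_right zero_le_one))
    have last := hM (t + n) (by positivity)
    push_cast
    rw [← add_assoc]
    linarith

theorem integral_le_natCast_mul {φ : ℝ → ℝ} {M : ℝ} (hφ : ContinuousOn φ (Ici 0))
    (hφ0 : ∀ t, 0 ≤ φ t) (hM : ∀ t, 0 ≤ t → ∫ s in t..(t + 1), φ s ≤ M) (N : ℕ) {a b : ℝ}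
    (ha : 0 ≤ a) (hab : a ≤ b) (hN : b - a ≤ N) : ∫ s in a..b, φ s ≤ N * M :=
  calc ∫ s in a..b, φ s ≤ ∫ s in a..(a + N), φ s :=
        integral_mono_interval le_rfl hab (by linarith) (ae_of_all _ hφ0)
          ((hφ.mono fun _ hs => ha.trans hs.1).intervalIntegrable_of_Icc (by linarith))
    _ ≤ N * M := integral_add_natCast_le_natCast_mul hφ hM N ha

theorem sub_le_integral_of_hasDerivWithinAt_Ici {F F' φ : ℝ → ℝ} {a b : ℝ} (ha : 0 ≤ a)
    (hab : a ≤ b) (hF : ∀ t ∈ Ici (0 : ℝ), HasDerivWithinAt F (F' t) (Ici 0) t)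
    (hφ : ContinuousOn φ (Ici 0)) (hle : ∀ t ∈ Ici (0 : ℝ), F' t ≤ φ t) :
    F b - F a ≤ ∫ t in a..b, φ t := by
  have nonneg {t : ℝ} (ht : t ∈ Icc a b) : t ∈ Ici (0 : ℝ) := ha.trans ht.1
  refine sub_le_integral_of_hasDeriv_right_of_le hab
    (fun t ht => (hF t (nonneg ht)).continuousWithinAt.mono fun _ => nonneg)
    (fun t ht => ?_) (hφ.mono fun _ => nonneg).integrableOn_Icc
    (fun t ht => hle t (nonneg (Ioo_subset_Icc_self ht)))
  have ht0 : 0 ≤ t := nonneg (Ioo_subset_Icc_self ht)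
  exact (hF t ht0).mono fun s hs => ht0.trans hs.le

theorem eventually_le_of_le_add_of_slow_decay {E : ℝ → ℝ} {T G R δ : ℝ} (hT : 0 < T)
    (hδ : 0 < δ) (growth : ∀ t, 0 ≤ t → ∀ s ∈ Icc t (t + T), E s ≤ E t + G)
    (slow_decay : ∀ t, 0 ≤ t → E t - δ ≤ E (t + T) → E t ≤ R) :
    ∀ᶠ t in atTop, E t ≤ R + 2 * G := by
  have one_window (t : ℝ) (ht : 0 ≤ t) : E (t + T) ≤ max (E t - δ) (R + G) := by
    rcases le_total (E t - δ) (E (t + T)) with slow | fast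
    · have := growth t ht (t + T) ⟨by linarith, le_rfl⟩
      exact le_max_of_le_right (by linarith [slow_decay t ht slow])
    · exact le_max_of_le_left fast
  have many_windows (k : ℕ) : E (k * T) ≤ max (E 0 - k * δ) (R + G) := by
    induction k with
    | zero => simp
    | succ k ih =>
      have step := one_window (k * T) (by positivity)
      push_cast
      rw [add_one_mul]
      grind
  obtain ⟨k₀, hk₀⟩ := exists_nat_ge ((E 0 - (R + G)) / δ)
  rw [div_le_iff₀ hδ] at hk₀
  filter_upwards [eventually_ge_atTop (k₀ * T)] with t ht
  have ht0 : 0 ≤ t := le_trans (by positivity) ht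
  set k := ⌊t / T⌋₊
  have hkt : k * T ≤ t := (le_div_iff₀ hT).1 (Nat.floor_le (by positivity))
  have htk : t ≤ k * T + T := by
    linarith [(div_lt_iff₀ hT).1 (Nat.lt_floor_add_one (t / T))]
  have hkk₀ : (k₀ : ℝ) * δ ≤ k * δ := by
    gcongr
    exact Nat.le_floor ((le_div_iff₀ hT).2 ht)
  have at_multiple : E (k * T) ≤ R + G := (many_windows k).trans (max_le (by linarith) le_rfl)
  linarith [growth (k * T) (by positivity) t ⟨hkt, htk⟩]

/-- The rate at which the energy can grow: the part of `c η z + C₁` that the damping term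
`γ z ^ (α + 2)` does not absorb is at most `growthRate γ C₁ c * (1 + η ^ 2)`. -/
noncomputable def growthRate (γ C₁ c : ℝ) : ℝ := C₁ + γ / 2 + c ^ 2 / (2 * γ)

/-- The size of the velocity on a window of length `T` over which the energy drops by at most `1`:
it bounds the integrals of `z ^ 2` and `z ^ (α + 1)`, up to the factors `m ^ 2` and `m`. -/
noncomputable def velocityConst (γ C₁ c T : ℝ) : ℝ :=
  2 / γ * (1 + 2 * growthRate γ C₁ c * T) + T

/-- The size of everything that is tested against `u` in the equation (damping and forcing), in
`L¹` over a window of length `T` over which the energy drops by at most `1`, up to the factor `m`.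
Here `J` stands for the norm of `V → H`. -/
noncomputable def forceConst (γ C₁ K C₂ c J T : ℝ) : ℝ :=
  T * (C₂ + J) + K * velocityConst γ C₁ c T

/-- The radius, up to the factor `m ^ 2`, of the energy ball outside of which the energy drops by
more than `1` over every window of length `T`. -/
noncomputable def absorbingConst (γ C₁ K C₂ c J T : ℝ) : ℝ :=
  2 * T + (2 * T + J + 1) * (2 * growthRate γ C₁ c * T) + 2 * c ^ 2 * velocityConst γ C₁ c T +
    forceConst γ C₁ K C₂ c J T ^ 2 / 2

section Constants

variable {γ C₁ K C₂ c J T : ℝ}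

theorem growthRate_nonneg (hγ : 0 < γ) (hC₁ : 0 ≤ C₁) : 0 ≤ growthRate γ C₁ c := by
  unfold growthRate
  positivity

theorem velocityConst_nonneg (hγ : 0 < γ) (hC₁ : 0 ≤ C₁) (hT : 0 ≤ T) :
    0 ≤ velocityConst γ C₁ c T := by
  have := growthRate_nonneg (c := c) hγ hC₁
  unfold velocityConst
  positivity

theorem absorbingConst_pos (hγ : 0 < γ) (hC₁ : 0 ≤ C₁) (hJ : 0 ≤ J) (hT : 0 < T) :
    0 < absorbingConst γ C₁ K C₂ c J T := by
  have := growthRate_nonneg (c := c) hγ hC₁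
  have := velocityConst_nonneg (c := c) hγ hC₁ hT.le
  unfold absorbingConst
  positivity

theorem le_absorbingConst_mul_sq {m E₀ : ℝ} (hT : J + 1 ≤ T) (hJ : 0 ≤ J) (hm : 1 ≤ m)
    (hE₀ : 0 ≤ E₀) (hγ : 0 < γ) (hC₁ : 0 ≤ C₁)
    (h : 2 * T * (E₀ - 1 - 2 * growthRate γ C₁ c * T * m ^ 2) ≤
      J * (2 * E₀ + 2 * growthRate γ C₁ c * T * m ^ 2) +
        2 * c ^ 2 * (velocityConst γ C₁ c T * m ^ 2) +
        forceConst γ C₁ K C₂ c J T * m *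
          √(2 * (E₀ + 2 * growthRate γ C₁ c * T * m ^ 2))) :
    E₀ ≤ absorbingConst γ C₁ K C₂ c J T * m ^ 2 := by
  have hd := growthRate_nonneg (c := c) hγ hC₁
  have hT0 : 0 ≤ T := by linarith
  set G := 2 * growthRate γ C₁ c * T with hG
  set F := forceConst γ C₁ K C₂ c J T with hF
  have hB : √(2 * (E₀ + G * m ^ 2)) ^ 2 = 2 * (E₀ + G * m ^ 2) := Real.sq_sqrt (by positivity)
  have young := two_mul_le_add_sq (F * m) √(2 * (E₀ + G * m ^ 2))
  have window_const : 2 * T * 1 ≤ 2 * T * m ^ 2 := by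
    gcongr
    exact one_le_pow₀ hm
  have absorb : E₀ * (J + 1) ≤ E₀ * T := by gcongr
  unfold absorbingConst
  rw [← hG, ← hF]
  linarith

end Constants

section EnergyWindow

variable {α γ C₁ c : ℝ}

theorem mul_add_sub_mul_rpow_le {l z η : ℝ} (hα : 0 ≤ α) (hγ : 0 < γ) (hC₁ : 0 ≤ C₁)
    (hl : 1 ≤ l) (hz : 0 ≤ z) :
    c * η * z + C₁ - γ * z ^ (α + 2) ≤
      growthRate γ C₁ c * (l ^ (α + 2) + η ^ 2 / l ^ α) - γ / 2 * z ^ (α + 2) := by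
  have hl0 : 0 < l := by linarith
  have young : c * η * z ≤ (c * η) ^ 2 / (2 * (γ * l ^ α)) + γ * l ^ α * z ^ 2 / 2 :=
    mul_le_sq_div_add_mul_sq (by positivity)
  have interpolation : l ^ α * z ^ 2 ≤ l ^ (α + 2) + z ^ (α + 2) := by
    simpa using rpow_mul_rpow_le_rpow_add_add_rpow_add hl0.le hz hα zero_le_two
  have absorbed := mul_le_mul_of_nonneg_left interpolation (half_pos hγ).le
  have const_le : C₁ * 1 ≤ C₁ * l ^ (α + 2) := by
    gcongr
    exact Real.one_le_rpow hl (by positivity)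
  have slack : 0 ≤ (C₁ + γ / 2) * (η ^ 2 / l ^ α) + c ^ 2 / (2 * γ) * l ^ (α + 2) := by positivity
  have forcing : (c * η) ^ 2 / (2 * (γ * l ^ α)) = c ^ 2 / (2 * γ) * (η ^ 2 / l ^ α) := by
    field_simp
  unfold growthRate
  linarith

/-- A time window `[a, b]` of length at most `T` on which the forcing `η` has size `m` in mean
square, while the energy increases by `X` at a speed limited by the power balance; `z` is the
`Z`-norm of the velocity. -/
structure EnergyWindow (α γ C₁ c T m a b : ℝ) (z η : ℝ → ℝ) (X : ℝ) : Prop where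
  le : a ≤ b
  length_le : b - a ≤ T
  one_le_size : 1 ≤ m
  continuousOn_velocity : ContinuousOn z (Icc a b)
  velocity_nonneg : ∀ t, 0 ≤ z t
  continuousOn_forcing : ContinuousOn η (Icc a b)
  integral_forcing_sq_le : ∫ t in a..b, η t ^ 2 ≤ T * m ^ 2
  increase_le : X ≤ ∫ t in a..b, (c * η t * z t + C₁ - γ * z t ^ (α + 2))

namespace EnergyWindow

variable {a b T m X : ℝ} {z η : ℝ → ℝ}

theorem intervalIntegrable {φ : ℝ → ℝ} (w : EnergyWindow α γ C₁ c T m a b z η X)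
    (hφ : ContinuousOn φ (Icc a b)) : IntervalIntegrable φ volume a b :=
  hφ.intervalIntegrable_of_Icc w.le

theorem continuousOn_velocity_rpow {p : ℝ} (w : EnergyWindow α γ C₁ c T m a b z η X)
    (hp : 0 ≤ p) : ContinuousOn (fun t => z t ^ p) (Icc a b) :=
  w.continuousOn_velocity.rpow_const fun _ _ => Or.inr hp

theorem window_nonneg (w : EnergyWindow α γ C₁ c T m a b z η X) : 0 ≤ T := by
  linarith [w.le, w.length_le]

theorem integral_forcing_le (w : EnergyWindow α γ C₁ c T m a b z η X) :
    ∫ t in a..b, η t ≤ T * m := by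
  have hη := w.continuousOn_forcing
  have hm : 0 < m := zero_lt_one.trans_le w.one_le_size
  have pointwise (t : ℝ) : η t ≤ m / 2 + (2 * m)⁻¹ * η t ^ 2 := by
    have := mul_le_sq_div_add_mul_sq (x := η t) (y := 1) hm
    rw [div_eq_inv_mul] at this
    linarith
  calc ∫ t in a..b, η t ≤ ∫ t in a..b, (m / 2 + (2 * m)⁻¹ * η t ^ 2) :=
        integral_mono_on w.le (w.intervalIntegrable hη) (w.intervalIntegrable (by fun_prop))
          fun t _ => pointwise t
    _ = (b - a) * (m / 2) + (2 * m)⁻¹ * ∫ t in a..b, η t ^ 2 := by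
        rw [intervalIntegral.integral_add (w.intervalIntegrable (by fun_prop))
            (w.intervalIntegrable (by fun_prop)),
          intervalIntegral.integral_const, intervalIntegral.integral_const_mul, smul_eq_mul]
    _ ≤ T * (m / 2) + (2 * m)⁻¹ * (T * m ^ 2) := by
        gcongr
        exacts [w.length_le, w.integral_forcing_sq_le]
    _ = T * m := by
        field_simp
        ring

theorem rpow_mul_integral_rpow_le {p q l : ℝ} (w : EnergyWindow α γ C₁ c T m a b z η X)
    (hp : 0 ≤ p) (hq : 0 ≤ q) (hl : 0 ≤ l) :
    l ^ q * ∫ t in a..b, z t ^ p ≤ (∫ t in a..b, z t ^ (p + q)) + T * l ^ (p + q) := by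
  have hzp := w.continuousOn_velocity_rpow hp
  have hzpq := w.continuousOn_velocity_rpow (add_nonneg hp hq)
  calc l ^ q * ∫ t in a..b, z t ^ p = ∫ t in a..b, z t ^ p * l ^ q := by
        rw [intervalIntegral.integral_mul_const, mul_comm]
    _ ≤ ∫ t in a..b, (z t ^ (p + q) + l ^ (p + q)) :=
        integral_mono_on w.le (w.intervalIntegrable (by fun_prop))
          (w.intervalIntegrable (by fun_prop)) fun t _ =>
            rpow_mul_rpow_le_rpow_add_add_rpow_add (w.velocity_nonneg t) hl hp hq
    _ = (∫ t in a..b, z t ^ (p + q)) + (b - a) * l ^ (p + q) := by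
        rw [intervalIntegral.integral_add (w.intervalIntegrable hzpq)
            (w.intervalIntegrable (by fun_prop)),
          intervalIntegral.integral_const, smul_eq_mul]
    _ ≤ (∫ t in a..b, z t ^ (p + q)) + T * l ^ (p + q) := by
        gcongr
        exact w.length_le

theorem increase_le_sub_integral_rpow (w : EnergyWindow α γ C₁ c T m a b z η X) (hα : 0 ≤ α)
    (hγ : 0 < γ) (hC₁ : 0 ≤ C₁) {l : ℝ} (hl : 1 ≤ l) :
    X ≤ growthRate γ C₁ c * T * (l ^ (α + 2) + m ^ 2 / l ^ α) -
      γ / 2 * ∫ t in a..b, z t ^ (α + 2) := by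
  have hz := w.continuousOn_velocity
  have hη := w.continuousOn_forcing
  have hzα := w.continuousOn_velocity_rpow (show 0 ≤ α + 2 by positivity)
  have hd := growthRate_nonneg (c := c) hγ hC₁
  calc X ≤ ∫ t in a..b, (c * η t * z t + C₁ - γ * z t ^ (α + 2)) := w.increase_le
    _ ≤ ∫ t in a..b, (growthRate γ C₁ c * (l ^ (α + 2) + η t ^ 2 / l ^ α) -
          γ / 2 * z t ^ (α + 2)) :=
        integral_mono_on w.le (w.intervalIntegrable (by fun_prop))
          (w.intervalIntegrable (by fun_prop)) fun t _ =>
            mul_add_sub_mul_rpow_le hα hγ hC₁ hl (w.velocity_nonneg t)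
    _ = growthRate γ C₁ c * ((b - a) * l ^ (α + 2) + (∫ t in a..b, η t ^ 2) / l ^ α) -
          γ / 2 * ∫ t in a..b, z t ^ (α + 2) := by
        rw [intervalIntegral.integral_sub (w.intervalIntegrable (by fun_prop))
            (w.intervalIntegrable (by fun_prop)),
          intervalIntegral.integral_const_mul, intervalIntegral.integral_const_mul,
          intervalIntegral.integral_add (w.intervalIntegrable (by fun_prop))
            (w.intervalIntegrable (by fun_prop)),
          intervalIntegral.integral_const, intervalIntegral.integral_div, smul_eq_mul]
    _ ≤ growthRate γ C₁ c * (T * l ^ (α + 2) + T * m ^ 2 / l ^ α) -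
          γ / 2 * ∫ t in a..b, z t ^ (α + 2) := by
        gcongr
        exacts [w.length_le, w.integral_forcing_sq_le]
    _ = growthRate γ C₁ c * T * (l ^ (α + 2) + m ^ 2 / l ^ α) -
          γ / 2 * ∫ t in a..b, z t ^ (α + 2) := by ring

theorem increase_le_growthRate_mul (w : EnergyWindow α γ C₁ c T m a b z η X) (hα : 0 ≤ α)
    (hγ : 0 < γ) (hC₁ : 0 ≤ C₁) : X ≤ 2 * growthRate γ C₁ c * T * m ^ 2 := by
  have hd := growthRate_nonneg (c := c) hγ hC₁
  have hT := w.window_nonneg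
  have balance := w.increase_le_sub_integral_rpow hα hγ hC₁ le_rfl
  have dissipation_nonneg : 0 ≤ γ / 2 * ∫ t in a..b, z t ^ (α + 2) :=
    mul_nonneg (by positivity)
      (integral_nonneg w.le fun t _ => Real.rpow_nonneg (w.velocity_nonneg t) _)
  have one_le_sq : growthRate γ C₁ c * T * 1 ≤ growthRate γ C₁ c * T * m ^ 2 := by
    gcongr
    exact one_le_pow₀ w.one_le_size
  simp only [Real.one_rpow, div_one] at balance
  linarith

theorem integral_rpow_le (w : EnergyWindow α γ C₁ c T m a b z η X) (hα : 0 ≤ α) (hγ : 0 < γ)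
    (hC₁ : 0 ≤ C₁) (hX : -1 ≤ X) {l Y : ℝ} (hl : 1 ≤ l) (hY : 1 ≤ Y)
    (hlY : l ^ (α + 2) + m ^ 2 / l ^ α ≤ 2 * Y) :
    ∫ t in a..b, z t ^ (α + 2) ≤ 2 / γ * (1 + 2 * growthRate γ C₁ c * T) * Y := by
  have hd := growthRate_nonneg (c := c) hγ hC₁
  have hT := w.window_nonneg
  have balance := w.increase_le_sub_integral_rpow hα hγ hC₁ hl
  have supply := mul_le_mul_of_nonneg_left hlY (mul_nonneg hd hT)
  have dissipation : γ / 2 * ∫ t in a..b, z t ^ (α + 2) ≤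
      (1 + 2 * growthRate γ C₁ c * T) * Y := by linarith
  calc ∫ t in a..b, z t ^ (α + 2) = 2 / γ * (γ / 2 * ∫ t in a..b, z t ^ (α + 2)) := by
        field_simp
    _ ≤ 2 / γ * ((1 + 2 * growthRate γ C₁ c * T) * Y) := by gcongr
    _ = 2 / γ * (1 + 2 * growthRate γ C₁ c * T) * Y := by ring

theorem integral_velocity_sq_le (w : EnergyWindow α γ C₁ c T m a b z η X) (hα : 0 ≤ α)
    (hγ : 0 < γ) (hC₁ : 0 ≤ C₁) (hX : -1 ≤ X) :
    ∫ t in a..b, z t ^ 2 ≤ velocityConst γ C₁ c T * m ^ 2 := by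
  have hm2 : 1 ≤ m ^ 2 := one_le_pow₀ w.one_le_size
  have high_power := w.integral_rpow_le hα hγ hC₁ hX le_rfl hm2
    (by simp only [Real.one_rpow, div_one]; linarith)
  have interpolation := w.rpow_mul_integral_rpow_le zero_le_two hα zero_le_one
  have length_le : T * 1 ≤ T * m ^ 2 := mul_le_mul_of_nonneg_left hm2 w.window_nonneg
  simp only [Real.one_rpow, one_mul, Real.rpow_two, add_comm 2 α] at interpolation
  unfold velocityConst
  linarith

theorem integral_velocity_rpow_le (w : EnergyWindow α γ C₁ c T m a b z η X) (hα : 0 ≤ α)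
    (hγ : 0 < γ) (hC₁ : 0 ≤ C₁) (hX : -1 ≤ X) :
    ∫ t in a..b, z t ^ (α + 1) ≤ velocityConst γ C₁ c T * m := by
  have hm := w.one_le_size
  -- This weight makes the two terms of `increase_le_sub_integral_rpow` equal.
  obtain ⟨l, hl, hlm⟩ : ∃ l : ℝ, 1 ≤ l ∧ l ^ (α + 1) = m :=
    ⟨m ^ (α + 1)⁻¹, Real.one_le_rpow hm (by positivity),
      Real.rpow_inv_rpow (by linarith) (by positivity)⟩
  have hl0 : 0 < l := by linarith
  have hlα0 : 0 < l ^ α := Real.rpow_pos_of_pos hl0 α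
  have hlα : l ^ α * l = m := by rw [← Real.rpow_add_one hl0.ne', hlm]
  have hlα2 : l ^ (α + 2) = l * m := by
    rw [show α + 2 = α + 1 + 1 by ring, Real.rpow_add_one hl0.ne', hlm, mul_comm]
  have high_power := w.integral_rpow_le hα hγ hC₁ hX hl (one_le_mul_of_one_le_of_one_le hl hm) (by
    have : m ^ 2 / l ^ α = l * m := by
      rw [div_eq_iff hlα0.ne', sq, ← hlα]
      ring
    rw [hlα2, this, two_mul])
  have interpolation := w.rpow_mul_integral_rpow_le (show 0 ≤ α + 1 by positivity) zero_le_one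
    hl0.le
  rw [Real.rpow_one, show α + 1 + 1 = α + 2 by ring, hlα2] at interpolation
  refine le_of_mul_le_mul_left (interpolation.trans ?_) hl0
  unfold velocityConst
  linarith

theorem integral_force_le {K C₂ J : ℝ} (w : EnergyWindow α γ C₁ c T m a b z η X) (hα : 0 ≤ α)
    (hγ : 0 < γ) (hC₁ : 0 ≤ C₁) (hK : 0 ≤ K) (hC₂ : 0 ≤ C₂) (hJ : 0 ≤ J) (hX : -1 ≤ X) :
    ∫ t in a..b, (C₂ + K * z t ^ (α + 1) + J * η t) ≤ forceConst γ C₁ K C₂ c J T * m := by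
  have hη := w.continuousOn_forcing
  have hzα := w.continuousOn_velocity_rpow (show 0 ≤ α + 1 by positivity)
  have hm := w.one_le_size
  have hT := w.window_nonneg
  calc ∫ t in a..b, (C₂ + K * z t ^ (α + 1) + J * η t)
      = (b - a) * C₂ + K * (∫ t in a..b, z t ^ (α + 1)) + J * ∫ t in a..b, η t := by
        rw [intervalIntegral.integral_add (w.intervalIntegrable (by fun_prop))
            (w.intervalIntegrable (by fun_prop)),
          intervalIntegral.integral_add (w.intervalIntegrable (by fun_prop))
            (w.intervalIntegrable (by fun_prop)),
          intervalIntegral.integral_const, intervalIntegral.integral_const_mul,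
          intervalIntegral.integral_const_mul, smul_eq_mul]
    _ ≤ T * (C₂ * m) + K * (velocityConst γ C₁ c T * m) + J * (T * m) := by
        gcongr
        · exact w.length_le
        · exact le_mul_of_one_le_right hC₂ hm
        · exact w.integral_velocity_rpow_le hα hγ hC₁ hX
        · exact w.integral_forcing_le
    _ = forceConst γ C₁ K C₂ c J T * m := by
        unfold forceConst
        ring

theorem integral_cross_le {K C₂ J E₀ B : ℝ} {E n : ℝ → ℝ}
    (w : EnergyWindow α γ C₁ c T m a b z η X) (hα : 0 ≤ α) (hγ : 0 < γ) (hC₁ : 0 ≤ C₁)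
    (hK : 0 ≤ K) (hC₂ : 0 ≤ C₂) (hJ : 0 ≤ J) (hX : -1 ≤ X) (hη : ∀ t, 0 ≤ η t)
    (hE : ContinuousOn E (Icc a b)) (hn : ContinuousOn n (Icc a b)) (hB : 0 ≤ B)
    (hE₀ : ∀ t ∈ Icc a b, E₀ ≤ E t) (hnB : ∀ t ∈ Icc a b, n t ≤ B) :
    ∫ t in a..b, (2 * c ^ 2 * z t ^ 2 - 2 * E t + (C₂ + K * z t ^ (α + 1) + J * η t) * n t) ≤
      2 * c ^ 2 * (velocityConst γ C₁ c T * m ^ 2) - 2 * (b - a) * E₀ +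
        forceConst γ C₁ K C₂ c J T * m * B := by
  have hz := w.continuousOn_velocity
  have hηc := w.continuousOn_forcing
  have hzα := w.continuousOn_velocity_rpow (show 0 ≤ α + 1 by positivity)
  have force_nonneg (t : ℝ) : 0 ≤ C₂ + K * z t ^ (α + 1) + J * η t := by
    have := Real.rpow_nonneg (w.velocity_nonneg t) (α + 1)
    have := hη t
    positivity
  calc ∫ t in a..b, (2 * c ^ 2 * z t ^ 2 - 2 * E t + (C₂ + K * z t ^ (α + 1) + J * η t) * n t)
      ≤ ∫ t in a..b,
          (2 * c ^ 2 * z t ^ 2 - 2 * E₀ + (C₂ + K * z t ^ (α + 1) + J * η t) * B) :=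
        integral_mono_on w.le (w.intervalIntegrable (by fun_prop))
          (w.intervalIntegrable (by fun_prop)) fun t ht => by
            gcongr
            exacts [hE₀ t ht, force_nonneg t, hnB t ht]
    _ = 2 * c ^ 2 * (∫ t in a..b, z t ^ 2) - (b - a) * (2 * E₀) +
          (∫ t in a..b, (C₂ + K * z t ^ (α + 1) + J * η t)) * B := by
        rw [intervalIntegral.integral_add (w.intervalIntegrable (by fun_prop))
            (w.intervalIntegrable (by fun_prop)),
          intervalIntegral.integral_sub (w.intervalIntegrable (by fun_prop))
            (w.intervalIntegrable (by fun_prop)),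
          intervalIntegral.integral_const, intervalIntegral.integral_const_mul,
          intervalIntegral.integral_mul_const, smul_eq_mul]
    _ ≤ 2 * c ^ 2 * (velocityConst γ C₁ c T * m ^ 2) - (b - a) * (2 * E₀) +
          forceConst γ C₁ K C₂ c J T * m * B := by
        gcongr
        exacts [w.integral_velocity_sq_le hα hγ hC₁ hX,
          w.integral_force_le hα hγ hC₁ hK hC₂ hJ hX]
    _ = 2 * c ^ 2 * (velocityConst γ C₁ c T * m ^ 2) - 2 * (b - a) * E₀ +
          forceConst γ C₁ K C₂ c J T * m * B := by ring

end EnergyWindow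

end EnergyWindow

section DampedEquation

variable {V H Z : Type*} [NormedAddCommGroup V] [InnerProductSpace ℝ V]
  [NormedAddCommGroup H] [InnerProductSpace ℝ H] [NormedAddCommGroup Z] [NormedSpace ℝ Z]

/-- A solution on `[0, ∞)` of `ü + A u + g(u̇) = h`, with the equation in `V'` tested against every
`v : V`. The functions `u'` and `u''` are the derivatives `u̇` in `V` and `ü` in `H`, one-sided at
`0`. -/
structure IsDampedSolution (j : V →L[ℝ] H) (g : V → V →L[ℝ] ℝ) (h : ℝ → H) (u u' : ℝ → V)
    (u'' : ℝ → H) : Prop where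
  hasDerivWithinAt : ∀ t ∈ Ici (0 : ℝ), HasDerivWithinAt u (u' t) (Ici 0) t
  continuousOn_velocity : ContinuousOn u' (Ici 0)
  hasDerivWithinAt_velocity :
    ∀ t ∈ Ici (0 : ℝ), HasDerivWithinAt (fun s => j (u' s)) (u'' t) (Ici 0) t
  equation : ∀ t ∈ Ici (0 : ℝ), ∀ v,
    ⟪u'' t, j v⟫ + ⟪u t, v⟫ + g (u' t) v = ⟪h t, j v⟫

/-- Conditions (P1) and (P2) on the damping `g`, where the role of the intermediate space is played
by the seminorm `‖e v‖` on `V`, which dominates `‖j v‖` up to the factor `c`. -/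
structure IsPowerDamping (j : V →L[ℝ] H) (e : V →L[ℝ] Z) (g : V → V →L[ℝ] ℝ)
    (α γ C₁ K C₂ c : ℝ) : Prop where
  exponent_nonneg : 0 ≤ α
  coercivity_pos : 0 < γ
  defect_nonneg : 0 ≤ C₁
  growth_nonneg : 0 ≤ K
  offset_nonneg : 0 ≤ C₂
  coercive : ∀ v, γ * ‖e v‖ ^ (α + 2) - C₁ ≤ g v v
  norm_le : ∀ v, ‖g v‖ ≤ C₂ + K * ‖e v‖ ^ (α + 1)
  norm_map_le : ∀ v, ‖j v‖ ≤ c * ‖e v‖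

/-- The energy `(|j u̇|² + ‖u‖²) / 2`. -/
noncomputable def energy (j : V →L[ℝ] H) (u u' : ℝ → V) (t : ℝ) : ℝ :=
  (‖j (u' t)‖ ^ 2 + ‖u t‖ ^ 2) / 2

theorem energy_nonneg (j : V →L[ℝ] H) (u u' : ℝ → V) (t : ℝ) : 0 ≤ energy j u u' t := by
  unfold energy
  positivity

theorem norm_sq_le_two_mul_energy (j : V →L[ℝ] H) (u u' : ℝ → V) (t : ℝ) :
    ‖u t‖ ^ 2 ≤ 2 * energy j u u' t := by
  unfold energy
  linarith [sq_nonneg ‖j (u' t)‖]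

theorem abs_inner_le_norm_mul_energy (j : V →L[ℝ] H) (u u' : ℝ → V) (t : ℝ) :
    |⟪j (u' t), j (u t)⟫| ≤ ‖j‖ * energy j u u' t :=
  calc |⟪j (u' t), j (u t)⟫| ≤ ‖j (u' t)‖ * ‖j (u t)‖ := abs_real_inner_le_norm _ _
    _ ≤ ‖j (u' t)‖ * (‖j‖ * ‖u t‖) := by
        gcongr
        exact j.le_opNorm _
    _ = ‖j‖ * (‖j (u' t)‖ * ‖u t‖) := by ring
    _ ≤ ‖j‖ * energy j u u' t := by
        gcongr
        unfold energy
        linarith [two_mul_le_add_sq ‖j (u' t)‖ ‖u t‖]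

variable {j : V →L[ℝ] H} {e : V →L[ℝ] Z} {g : V → V →L[ℝ] ℝ} {α γ C₁ K C₂ c : ℝ}

namespace IsPowerDamping

theorem power_le (D : IsPowerDamping j e g α γ C₁ K C₂ c) (w : H) (v : V) :
    ⟪w, j v⟫ - g v v ≤ c * ‖w‖ * ‖e v‖ + C₁ - γ * ‖e v‖ ^ (α + 2) := by
  have forcing : ⟪w, j v⟫ ≤ ‖w‖ * (c * ‖e v‖) := (real_inner_le_norm _ _).trans
    (mul_le_mul_of_nonneg_left (D.norm_map_le v) (norm_nonneg w))
  linarith [D.coercive v]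

theorem cross_power_le (D : IsPowerDamping j e g α γ C₁ K C₂ c) (w : H) (x v : V) :
    ‖j v‖ ^ 2 - ‖x‖ ^ 2 + ⟪w, j x⟫ - g v x ≤
      2 * c ^ 2 * ‖e v‖ ^ 2 - (‖j v‖ ^ 2 + ‖x‖ ^ 2) +
        (C₂ + K * ‖e v‖ ^ (α + 1) + ‖j‖ * ‖w‖) * ‖x‖ := by
  have kinetic : ‖j v‖ ^ 2 ≤ c ^ 2 * ‖e v‖ ^ 2 := by
    rw [← mul_pow]
    exact pow_le_pow_left₀ (norm_nonneg _) (D.norm_map_le v) 2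
  have forcing : ⟪w, j x⟫ ≤ ‖w‖ * (‖j‖ * ‖x‖) := (real_inner_le_norm _ _).trans
    (mul_le_mul_of_nonneg_left (j.le_opNorm x) (norm_nonneg w))
  have damping : -(g v x) ≤ (C₂ + K * ‖e v‖ ^ (α + 1)) * ‖x‖ :=
    (neg_le_abs _).trans ((g v).le_of_opNorm_le (D.norm_le v) x)
  linarith

end IsPowerDamping

namespace IsDampedSolution

variable {h : ℝ → H} {u u' : ℝ → V} {u'' : ℝ → H} {T m : ℝ}

theorem continuousOn (sol : IsDampedSolution j g h u u' u'') : ContinuousOn u (Ici 0) :=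
  fun t ht => (sol.hasDerivWithinAt t ht).continuousWithinAt

theorem continuousOn_norm_velocity (sol : IsDampedSolution j g h u u' u'') (e : V →L[ℝ] Z) :
    ContinuousOn (fun t => ‖e (u' t)‖) (Ici 0) :=
  (e.continuous.comp_continuousOn sol.continuousOn_velocity).norm

theorem hasDerivWithinAt_energy (sol : IsDampedSolution j g h u u' u'') {t : ℝ}
    (ht : t ∈ Ici (0 : ℝ)) :
    HasDerivWithinAt (energy j u u') (⟪h t, j (u' t)⟫ - g (u' t) (u' t)) (Ici 0) t := by
  have deriv := ((sol.hasDerivWithinAt_velocity t ht).norm_sq.add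
    (sol.hasDerivWithinAt t ht).norm_sq).div_const 2
  refine deriv.congr_deriv ?_
  rw [real_inner_comm]
  linarith [sol.equation t ht (u' t)]

theorem hasDerivWithinAt_cross (sol : IsDampedSolution j g h u u' u'') {t : ℝ}
    (ht : t ∈ Ici (0 : ℝ)) :
    HasDerivWithinAt (fun s => ⟪j (u' s), j (u s)⟫)
      (‖j (u' t)‖ ^ 2 - ‖u t‖ ^ 2 + ⟪h t, j (u t)⟫ - g (u' t) (u t)) (Ici 0) t := by
  have deriv := (sol.hasDerivWithinAt_velocity t ht).inner ℝ
    (j.hasFDerivAt.comp_hasDerivWithinAt t (sol.hasDerivWithinAt t ht))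
  refine deriv.congr_deriv ?_
  have := sol.equation t ht (u t)
  rw [real_inner_self_eq_norm_sq] at this ⊢
  rw [Function.comp_apply]
  linarith

theorem continuousOn_energy (sol : IsDampedSolution j g h u u' u'') :
    ContinuousOn (energy j u u') (Ici 0) :=
  fun _ ht => (sol.hasDerivWithinAt_energy ht).continuousWithinAt

theorem energyWindow (sol : IsDampedSolution j g h u u' u'')
    (D : IsPowerDamping j e g α γ C₁ K C₂ c) (hh : ContinuousOn h (Ici 0)) (hm : 1 ≤ m)
    {a b : ℝ} (ha : 0 ≤ a) (hab : a ≤ b) (hT : b - a ≤ T)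
    (hhm : ∫ s in a..b, ‖h s‖ ^ 2 ≤ T * m ^ 2) :
    EnergyWindow α γ C₁ c T m a b (fun t => ‖e (u' t)‖) (fun t => ‖h t‖)
      (energy j u u' b - energy j u u' a) := by
  have subset : Icc a b ⊆ Ici 0 := fun _ ht => ha.trans ht.1
  have hz := sol.continuousOn_norm_velocity e
  have hα := D.exponent_nonneg
  have hzα : ContinuousOn (fun t => ‖e (u' t)‖ ^ (α + 2)) (Ici 0) :=
    hz.rpow_const fun _ _ => Or.inr (by positivity)
  exact
    { le := hab
      length_le := hT
      one_le_size := hm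
      continuousOn_velocity := hz.mono subset
      velocity_nonneg := fun _ => norm_nonneg _
      continuousOn_forcing := (hh.mono subset).norm
      integral_forcing_sq_le := hhm
      increase_le := sub_le_integral_of_hasDerivWithinAt_Ici ha hab
        (fun _ ht => sol.hasDerivWithinAt_energy ht) (by fun_prop)
        fun t _ => D.power_le (h t) (u' t) }

theorem cross_sub_le_integral (sol : IsDampedSolution j g h u u' u'')
    (D : IsPowerDamping j e g α γ C₁ K C₂ c) (hh : ContinuousOn h (Ici 0)) {a b : ℝ}
    (ha : 0 ≤ a) (hab : a ≤ b) :
    ⟪j (u' b), j (u b)⟫ - ⟪j (u' a), j (u a)⟫ ≤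
      ∫ t in a..b, (2 * c ^ 2 * ‖e (u' t)‖ ^ 2 - 2 * energy j u u' t +
        (C₂ + K * ‖e (u' t)‖ ^ (α + 1) + ‖j‖ * ‖h t‖) * ‖u t‖) := by
  have hu := sol.continuousOn
  have hE := sol.continuousOn_energy
  have hz := sol.continuousOn_norm_velocity e
  have hα := D.exponent_nonneg
  have hzα : ContinuousOn (fun t => ‖e (u' t)‖ ^ (α + 1)) (Ici 0) :=
    hz.rpow_const fun _ _ => Or.inr (by positivity)
  refine sub_le_integral_of_hasDerivWithinAt_Ici ha hab
    (fun _ ht => sol.hasDerivWithinAt_cross ht) (by fun_prop) fun t _ => ?_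
  refine (D.cross_power_le (h t) (u t) (u' t)).trans_eq ?_
  unfold energy
  ring

theorem energy_le_add (sol : IsDampedSolution j g h u u' u'')
    (D : IsPowerDamping j e g α γ C₁ K C₂ c) (hh : ContinuousOn h (Ici 0)) (hm : 1 ≤ m)
    (hhm : ∀ a b, 0 ≤ a → a ≤ b → b - a ≤ T → ∫ s in a..b, ‖h s‖ ^ 2 ≤ T * m ^ 2)
    {a b : ℝ} (ha : 0 ≤ a) (hab : a ≤ b) (hT : b - a ≤ T) :
    energy j u u' b ≤ energy j u u' a + 2 * growthRate γ C₁ c * T * m ^ 2 :=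
  sub_le_iff_le_add'.1 <|
    (sol.energyWindow D hh hm ha hab hT (hhm a b ha hab hT)).increase_le_growthRate_mul
      D.exponent_nonneg D.coercivity_pos D.defect_nonneg

theorem energy_le_of_slow_decay (sol : IsDampedSolution j g h u u' u'')
    (D : IsPowerDamping j e g α γ C₁ K C₂ c) (hh : ContinuousOn h (Ici 0)) (hm : 1 ≤ m)
    (hT : ‖j‖ + 1 ≤ T)
    (hhm : ∀ a b, 0 ≤ a → a ≤ b → b - a ≤ T → ∫ s in a..b, ‖h s‖ ^ 2 ≤ T * m ^ 2)
    {t : ℝ} (ht : 0 ≤ t) (slow : energy j u u' t - 1 ≤ energy j u u' (t + T)) :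
    energy j u u' t ≤ absorbingConst γ C₁ K C₂ c ‖j‖ T * m ^ 2 := by
  have hJ := norm_nonneg j
  have le_end : t ≤ t + T := by linarith
  have length : t + T - t = T := by ring
  set G := 2 * growthRate γ C₁ c * T * m ^ 2 with hG
  have growth {a b : ℝ} (hta : t ≤ a) (hab : a ≤ b) (hb : b ≤ t + T) :
      energy j u u' b ≤ energy j u u' a + G :=
    sol.energy_le_add D hh hm hhm (ht.trans hta) hab (by linarith)
  have displacement_le : ∀ s ∈ Icc t (t + T), ‖u s‖ ≤ √(2 * (energy j u u' t + G)) :=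
    fun s hs => Real.le_sqrt_of_sq_le <| (norm_sq_le_two_mul_energy j u u' s).trans <|
      mul_le_mul_of_nonneg_left (growth le_rfl hs.1 hs.2) zero_le_two
  have energy_ge : ∀ s ∈ Icc t (t + T), energy j u u' t - 1 - G ≤ energy j u u' s :=
    fun s hs => by linarith [growth hs.1 hs.2 le_rfl]
  have subset : Icc t (t + T) ⊆ Ici 0 := fun _ hs => ht.trans hs.1
  have window := sol.energyWindow D hh hm ht le_end length.le (hhm _ _ ht le_end length.le)
  have upper := (sol.cross_sub_le_integral D hh ht le_end).trans <|
    window.integral_cross_le D.exponent_nonneg D.coercivity_pos D.defect_nonneg D.growth_nonneg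
      D.offset_nonneg hJ (by linarith) (fun _ => norm_nonneg _)
      (sol.continuousOn_energy.mono subset) (sol.continuousOn.norm.mono subset)
      (Real.sqrt_nonneg _) energy_ge displacement_le
  have start_le := (abs_le.1 (abs_inner_le_norm_mul_energy j u u' t)).2
  have end_ge := (abs_le.1 (abs_inner_le_norm_mul_energy j u u' (t + T))).1
  have end_energy_le := mul_le_mul_of_nonneg_left (growth le_rfl le_end le_rfl) hJ
  rw [length] at upper
  refine le_absorbingConst_mul_sq hT hJ hm (energy_nonneg j u u' t) D.coercivity_pos
    D.defect_nonneg ?_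
  rw [← hG]
  linarith

theorem eventually_energy_le (sol : IsDampedSolution j g h u u' u'')
    (D : IsPowerDamping j e g α γ C₁ K C₂ c) (hh : ContinuousOn h (Ici 0)) {M : ℝ} (hM0 : 0 ≤ M)
    (hM : ∀ t, 0 ≤ t → ∫ s in t..(t + 1), ‖h s‖ ^ 2 ≤ M) {N : ℕ} (hN : ‖j‖ + 1 ≤ N) :
    ∀ᶠ t in atTop, energy j u u' t ≤
      (absorbingConst γ C₁ K C₂ c ‖j‖ N + 4 * growthRate γ C₁ c * N) * (1 + M) := by
  have hN0 : (0 : ℝ) < N := by linarith [norm_nonneg j]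
  have hm : 1 ≤ √(1 + M) := Real.one_le_sqrt.2 (by linarith)
  have hm2 : √(1 + M) ^ 2 = 1 + M := Real.sq_sqrt (by linarith)
  have hhm (a b : ℝ) (ha : 0 ≤ a) (hab : a ≤ b) (hbN : b - a ≤ N) :
      ∫ s in a..b, ‖h s‖ ^ 2 ≤ N * √(1 + M) ^ 2 := by
    rw [hm2]
    exact (integral_le_natCast_mul (hh.norm.pow 2) (fun _ => sq_nonneg _) hM N ha hab hbN).trans
      (by gcongr; linarith)
  filter_upwards [eventually_le_of_le_add_of_slow_decay hN0 one_pos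
    (fun t ht s hs => sol.energy_le_add D hh hm hhm ht hs.1 (by linarith [hs.2]))
    (fun t ht => sol.energy_le_of_slow_decay D hh hm hN hhm ht)] with t ht
  rw [hm2] at ht
  linarith

end IsDampedSolution

theorem stmt_7_general (D : IsPowerDamping j e g α γ C₁ K C₂ c) :
    ∃ K' : ℝ, 0 < K' ∧
      ∀ h : ℝ → H, ContinuousOn h (Ici 0) →
        BddAbove {x : ℝ | ∃ t : ℝ, 0 ≤ t ∧ x = ∫ s in t..(t + 1), ‖h s‖ ^ 2} →
        ∀ (u u' : ℝ → V) (u'' : ℝ → H), IsDampedSolution j g h u u' u'' →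
          limsup (fun t : ℝ => ‖j (u' t)‖ ^ 2 + ‖u t‖ ^ 2) atTop ≤
            K' * (1 + Real.sqrt
              (sSup {x : ℝ | ∃ t : ℝ, 0 ≤ t ∧ x = ∫ s in t..(t + 1), ‖h s‖ ^ 2}) ^ 2) := by
  obtain ⟨N, hN⟩ := exists_nat_ge (‖j‖ + 1)
  have hN0 : (0 : ℝ) < N := by linarith [norm_nonneg j]
  have hd := growthRate_nonneg (c := c) D.coercivity_pos D.defect_nonneg
  have hR := absorbingConst_pos (K := K) (C₂ := C₂) (c := c) D.coercivity_pos D.defect_nonneg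
    (norm_nonneg j) hN0
  refine ⟨2 * (absorbingConst γ C₁ K C₂ c ‖j‖ N + 4 * growthRate γ C₁ c * N), by positivity,
    fun h hh hbdd u u' u'' sol => ?_⟩
  have sup_nonneg :
      0 ≤ sSup {x : ℝ | ∃ t : ℝ, 0 ≤ t ∧ x = ∫ s in t..(t + 1), ‖h s‖ ^ 2} := by
    refine Real.sSup_nonneg ?_
    rintro _ ⟨t, -, rfl⟩
    exact integral_nonneg (by linarith) fun _ _ => by positivity
  rw [Real.sq_sqrt sup_nonneg]
  refine limsup_le_of_le (isCoboundedUnder_le_of_le atTop (x := 0) fun t => by positivity) ?_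
  filter_upwards [sol.eventually_energy_le D hh sup_nonneg
    (fun t ht => le_csSup hbdd ⟨t, ht, rfl⟩) hN] with t ht
  unfold energy at ht
  linarith

end DampedEquation

/-- Power-like damping. Under (P1) and (P2) (with the
intermediate space `Z`) there is a constant `K'` depending only on the data
(not on `h` nor on the solution) such that every strong solution satisfies
`limsup_{t→∞} (|j u̇(t)|² + ‖u(t)‖²) ≤ K' (1 + ‖h‖_{S²}²)`. -/
theorem stmt_7
    {V H Z : Type*}
    [NormedAddCommGroup V] [InnerProductSpace ℝ V] [CompleteSpace V]
    [NormedAddCommGroup H] [InnerProductSpace ℝ H] [CompleteSpace H]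
    [NormedAddCommGroup Z] [NormedSpace ℝ Z] [CompleteSpace Z]
    (j : V →L[ℝ] H) (hj_inj : Function.Injective j) (hj_dense : DenseRange j)
    (e : V →L[ℝ] Z) (he_inj : Function.Injective e)
    (f : Z →L[ℝ] H) (hf_inj : Function.Injective f)
    (hfe : ∀ v : V, f (e v) = j v)
    (ι : H → (V →L[ℝ] ℝ)) (hι : ∀ (w : H) (v : V), ι w v = ⟪w, j v⟫)
    (A : V → (V →L[ℝ] ℝ)) (hA : ∀ u v : V, A u v = ⟪u, v⟫)
    (g : V → (V →L[ℝ] ℝ)) (hg_cont : Continuous g)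
    (hg_mono : ∀ v w : V, (g v - g w) (v - w) ≥ 0)
    (α : ℝ) (hα : 0 ≤ α)
    (γ C₁ : ℝ) (hγ : 0 < γ) (hC₁ : 0 ≤ C₁)
    (hP1 : ∀ v : V, g v v ≥ γ * ‖e v‖ ^ (α + 2) - C₁)
    (K C₂ : ℝ) (hK : 0 < K) (hC₂ : 0 ≤ C₂)
    (hP2 : ∀ v : V, ‖g v‖ ≤ C₂ + K * ‖e v‖ ^ (α + 1)) :
    ∃ K' : ℝ, 0 < K' ∧
      ∀ h : ℝ → H, ContinuousOn h (Ici 0) →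
        BddAbove {x : ℝ | ∃ t : ℝ, 0 ≤ t ∧ x = ∫ s in t..(t + 1), ‖h s‖ ^ 2} →
        ∀ (u u' : ℝ → V) (u'' : ℝ → H),
          (∀ t ∈ Ici (0 : ℝ), HasDerivWithinAt u (u' t) (Ici 0) t) →
          ContinuousOn u' (Ici 0) →
          (∀ t ∈ Ici (0 : ℝ), HasDerivWithinAt (fun s => j (u' s)) (u'' t) (Ici 0) t) →
          ContinuousOn u'' (Ici 0) →
          (∀ t ∈ Ici (0 : ℝ), ι (u'' t) + A (u t) + g (u' t) = ι (h t)) →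
          limsup (fun t : ℝ => ‖j (u' t)‖ ^ 2 + ‖u t‖ ^ 2) atTop ≤
            K' * (1 + Real.sqrt
              (sSup {x : ℝ | ∃ t : ℝ, 0 ≤ t ∧ x = ∫ s in t..(t + 1), ‖h s‖ ^ 2}) ^ 2) := by
  obtain ⟨K', hK', bound⟩ := stmt_7_general (c := ‖f‖)
    ⟨hα, hγ, hC₁, hK.le, hC₂, hP1, hP2, fun v => hfe v ▸ f.le_opNorm (e v)⟩
  exact ⟨K', hK', fun h hh hbdd u u' u'' hu hu'c hu' _ heq => bound h hh hbdd u u' u''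
    ⟨hu, hu'c, hu', fun t ht v => by simpa [hι, hA] using DFunLike.congr_fun (heq t ht) v⟩⟩
end

section
/- Let α ≥ 0 and c > 0, and define g : V → V′ by g(v) = c |j v|_H^α · ι(j v) (the averaged damping of Example 2, with Z = H). Then g is continuous and monotone, satisfies ⟨g(v), v⟩ = c |j v|_H^{α+2} and ‖g(v)‖_{V′} ≤ c P |j v|_H^{α+1} (where P is the norm of j), and there exists a constant K′ > 0, independent of h and of the solution, such that for every continuous h : [0,∞) → H with ‖h‖_{S²} < ∞, every strong solution u of ü + A u + g(u̇) = h satisfies limsup_{t→∞} (|j u̇(t)|_H² + ‖u(t)‖_V²) ≤ K′ (1 + ‖h‖_{S²}²). -/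
open scoped RealInnerProductSpace
open Set Filter MeasureTheory intervalIntegral

/-!
Let `r = α + 2` with conjugate exponent `p`, and let `W = 1 + |j u̇|² + ‖u‖²`. For small `ε` the
perturbed energy `Φ = W + ε W ^ (p / 2 - 1) (j u̇, j u)` is comparable to `W`. In its derivative the
cross term produces `-ε W ^ (p / 2)`, and Young's inequality absorbs the rest into this and the
dissipated power `c |j u̇| ^ r`, so that `Φ' ≤ -δ Φ ^ (p / 2) + K (1 + |h| ^ p)`.

Since `p ≤ 2`, Jensen's inequality bounds the integral of `|h| ^ p` over a unit window by
`‖h‖_{S²} ^ p`. Hence as long as `Φ` exceeds a large multiple of `1 + ‖h‖_{S²}²` it drops by a fixed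
amount over each unit window, while over a window it never grows by more than a multiple of that
quantity.
-/

section RealInequalities

variable {p q r : ℝ}

lemma exists_const_mul_mul_le_rpow_add_rpow (hpq : p.HolderConjugate q) {b δ : ℝ} (hb : 0 ≤ b)
    (hδ : 0 < δ) :
    ∃ K : ℝ, 0 ≤ K ∧ ∀ x y : ℝ, 0 ≤ x → 0 ≤ y → b * (x * y) ≤ δ * x ^ p + K * y ^ q := by
  set μ := δ ^ p⁻¹
  have hμ : 0 < μ := Real.rpow_pos_of_pos hδ _
  have hμp : μ ^ p = δ := Real.rpow_inv_rpow hδ.le hpq.ne_zero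
  refine ⟨(b / μ) ^ q, by positivity, fun x y hx hy => ?_⟩
  calc b * (x * y) = (μ * x) * (b / μ * y) := by field_simp
    _ ≤ (μ * x) ^ p / p + (b / μ * y) ^ q / q :=
        Real.young_inequality_of_nonneg (by positivity) (by positivity) hpq
    _ ≤ (μ * x) ^ p + (b / μ * y) ^ q :=
        add_le_add (div_le_self (by positivity) hpq.lt.le)
          (div_le_self (by positivity) hpq.symm.lt.le)
    _ = δ * x ^ p + (b / μ) ^ q * y ^ q := by
        rw [Real.mul_rpow hμ.le hx, Real.mul_rpow (by positivity) hy, hμp]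

lemma sq_le_one_add_rpow (hr : 2 ≤ r) {a : ℝ} (ha : 0 ≤ a) : a ^ 2 ≤ 1 + a ^ r := by
  have hpow : 0 ≤ a ^ r := Real.rpow_nonneg ha r
  rcases le_total a 1 with ha1 | ha1
  · linarith [pow_le_one₀ ha ha1 (n := 2)]
  · have : a ^ (2 : ℝ) ≤ a ^ r := Real.rpow_le_rpow_of_exponent_le ha1 hr
    rw [Real.rpow_two] at this
    linarith

lemma integral_rpow_le_rpow_integral {f : ℝ → ℝ} {t : ℝ} (hf : ContinuousOn f (Icc t (t + 1)))
    (hf0 : ∀ s ∈ Icc t (t + 1), 0 ≤ f s) (hq0 : 0 ≤ q) (hq1 : q ≤ 1) :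
    ∫ s in t..t + 1, f s ^ q ≤ (∫ s in t..t + 1, f s) ^ q := by
  have hprob : IsProbabilityMeasure (volume.restrict (Ioc t (t + 1))) := ⟨by simp⟩
  have hfq : ContinuousOn (fun s => f s ^ q) (Icc t (t + 1)) :=
    hf.rpow_const fun _ _ => Or.inr hq0
  rw [integral_of_le (by linarith), integral_of_le (by linarith)]
  refine (Real.concaveOn_rpow hq0 hq1).le_map_integral
    (Real.continuous_rpow_const hq0).continuousOn isClosed_Ici ?_
    (hf.integrableOn_Icc.mono_set Ioc_subset_Icc_self)
    (hfq.integrableOn_Icc.mono_set Ioc_subset_Icc_self)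
  filter_upwards [ae_restrict_mem measurableSet_Ioc] with s hs
  exact hf0 s (Ioc_subset_Icc_self hs)

end RealInequalities

section UnitWindows

lemma eventually_le_of_le_or_le_sub {x : ℕ → ℝ} {M δ : ℝ} (hδ : 0 < δ)
    (hx : ∀ n, x (n + 1) ≤ M ∨ x (n + 1) ≤ x n - δ) : ∀ᶠ n in atTop, x n ≤ M := by
  obtain ⟨N, hN⟩ : ∃ N, x N ≤ M := by
    by_contra! hgt
    have hlin : ∀ n : ℕ, x n ≤ x 0 - n * δ := by
      intro n
      induction n with
      | zero => simp
      | succ n ih =>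
        push_cast
        linarith [(hx n).resolve_left (hgt (n + 1)).not_ge]
    obtain ⟨n, hn⟩ := exists_nat_gt ((x 0 - M) / δ)
    rw [div_lt_iff₀ hδ] at hn
    linarith [hlin n, hgt n]
  filter_upwards [eventually_ge_atTop N] with n hn
  induction n, hn using Nat.le_induction with
  | base => exact hN
  | succ n _ ih => rcases hx n with h | h <;> linarith

lemma eventually_le_of_unit_window {X : ℝ → ℝ} {M B δ : ℝ} (hδ : 0 < δ)
    (hinc : ∀ a b, 0 ≤ a → a ≤ b → b ≤ a + 1 → X b ≤ X a + B)
    (hdrop : ∀ t, 0 ≤ t → (∀ s ∈ Icc t (t + 1), M ≤ X s) → X (t + 1) ≤ X t - δ) :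
    ∀ᶠ t in atTop, X t ≤ M + 2 * B := by
  have hstep (t : ℝ) (ht : 0 ≤ t) : X (t + 1) ≤ M + B ∨ X (t + 1) ≤ X t - δ := by
    by_cases hdip : ∃ s ∈ Icc t (t + 1), X s ≤ M
    · obtain ⟨s, hs, hXs⟩ := hdip
      left
      linarith [hinc s (t + 1) (ht.trans hs.1) hs.2 (by linarith [hs.1])]
    · push Not at hdip
      exact Or.inr (hdrop t ht fun s hs => (hdip s hs).le)
  have hnat : ∀ᶠ n : ℕ in atTop, X n ≤ M + B :=
    eventually_le_of_le_or_le_sub hδ fun n => mod_cast hstep n n.cast_nonneg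
  filter_upwards [tendsto_nat_floor_atTop.eventually hnat, eventually_ge_atTop 0] with t hfloor ht
  linarith [hinc ⌊t⌋₊ t (Nat.cast_nonneg _) (Nat.floor_le ht) (Nat.lt_floor_add_one t).le]

lemma eventually_le_of_deriv_le {X f : ℝ → ℝ} {M B d : ℝ}
    (hX : ContinuousOn X (Ici 0)) (hX' : ∀ t, 0 < t → DifferentiableAt ℝ X t)
    (hf : ContinuousOn f (Ici 0)) (hf0 : ∀ t, 0 ≤ f t)
    (hfB : ∀ t, 0 ≤ t → ∫ s in t..t + 1, f s ≤ B) (hBd : B < d)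
    (hle : ∀ t, 0 < t → deriv X t ≤ f t)
    (hdecay : ∀ t, 0 < t → M ≤ X t → deriv X t ≤ f t - d) :
    ∀ᶠ t in atTop, X t ≤ M + 2 * B := by
  have hsub {a b : ℝ} (ha : 0 ≤ a) : Icc a b ⊆ Ici 0 := fun s hs => ha.trans hs.1
  have hint (t : ℝ) (ht : 0 ≤ t) : IntervalIntegrable f volume t (t + 1) :=
    (hf.mono (hsub ht)).intervalIntegrable_of_Icc (by linarith)
  have hftc {φ : ℝ → ℝ} (hφ : ContinuousOn φ (Ici 0)) {a b : ℝ} (ha : 0 ≤ a) (hab : a ≤ b)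
      (hφle : ∀ t ∈ Ioo a b, deriv X t ≤ φ t) : X b - X a ≤ ∫ s in a..b, φ s :=
    sub_le_integral_of_hasDeriv_right_of_le hab (hX.mono (hsub ha))
      (fun t ht => (hX' t (ha.trans_lt ht.1)).hasDerivAt.hasDerivWithinAt)
      (hφ.mono (hsub ha)).integrableOn_Icc hφle
  refine eventually_le_of_unit_window (sub_pos.2 hBd) (fun a b ha hab hba => ?_)
    fun t ht habove => ?_
  · have hmono : ∫ s in a..b, f s ≤ ∫ s in a..a + 1, f s :=
      integral_mono_interval le_rfl hab hba (Eventually.of_forall hf0) (hint a ha)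
    linarith [hftc hf ha hab fun t ht => hle t (ha.trans_lt ht.1), hfB a ha]
  · have hloss : X (t + 1) - X t ≤ ∫ s in t..t + 1, (f s - d) :=
      hftc (hf.sub continuousOn_const) ht (by linarith) fun s hs =>
        hdecay s (ht.trans_lt hs.1) (habove s (Ioo_subset_Icc_self hs))
    rw [integral_sub (hint t ht) intervalIntegrable_const, intervalIntegral.integral_const,
      smul_eq_mul] at hloss
    linarith [hfB t ht]

lemma integral_const_mul_one_add_rpow_le {f : ℝ → ℝ} {q K S t : ℝ} (hq0 : 0 ≤ q) (hq1 : q ≤ 1)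
    (hK : 0 ≤ K) (hf : ContinuousOn f (Icc t (t + 1))) (hf0 : ∀ s ∈ Icc t (t + 1), 0 ≤ f s)
    (hfS : ∫ s in t..t + 1, f s ≤ S) :
    ∫ s in t..t + 1, K * (1 + f s ^ q) ≤ 2 * K * (1 + S) ^ q := by
  have hI : 0 ≤ ∫ s in t..t + 1, f s := integral_nonneg (by linarith) hf0
  have hjensen : ∫ s in t..t + 1, f s ^ q ≤ (1 + S) ^ q :=
    (integral_rpow_le_rpow_integral hf hf0 hq0 hq1).trans
      (Real.rpow_le_rpow hI (by linarith) hq0)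
  have hone : 1 ≤ (1 + S) ^ q := Real.one_le_rpow (by linarith) hq0
  have hfq : IntervalIntegrable (fun s => f s ^ q) volume t (t + 1) :=
    (hf.rpow_const fun _ _ => Or.inr hq0).intervalIntegrable_of_Icc (by linarith)
  calc ∫ s in t..t + 1, K * (1 + f s ^ q) = K * (1 + ∫ s in t..t + 1, f s ^ q) := by
        rw [intervalIntegral.integral_const_mul, integral_add intervalIntegrable_const hfq]
        simp
    _ ≤ K * ((1 + S) ^ q + (1 + S) ^ q) := by gcongr
    _ = 2 * K * (1 + S) ^ q := by ring

lemma exists_eventually_le_of_deriv_le_rpow {q δ K : ℝ} (hq0 : 0 < q) (hq1 : q ≤ 1) (hδ : 0 < δ)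
    (hK : 0 < K) :
    ∃ C : ℝ, 0 < C ∧ ∀ (X f : ℝ → ℝ) (S : ℝ), (∀ t, 0 ≤ X t) → ContinuousOn X (Ici 0) →
      (∀ t, 0 < t → DifferentiableAt ℝ X t) → (∀ t, 0 ≤ f t) → ContinuousOn f (Ici 0) →
      (∀ t, 0 ≤ t → ∫ s in t..t + 1, f s ≤ S) →
      (∀ t, 0 < t → deriv X t ≤ -δ * X t ^ q + K * (1 + f t ^ q)) →
      ∀ᶠ t in atTop, X t ≤ C * (1 + S) := by
  refine ⟨(4 * K / δ) ^ q⁻¹ + 4 * K, by positivity, ?_⟩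
  intro X f S hX0 hX hX' hf0 hf hfS hle
  have hS : 0 ≤ S := (integral_nonneg (by norm_num) fun s _ => hf0 s).trans (hfS 0 le_rfl)
  set M := (4 * K / δ) ^ q⁻¹ * (1 + S)
  set B := 2 * K * (1 + S) ^ q
  have hB : 0 < B := by positivity
  have hMB : δ * M ^ q = 2 * B := by
    rw [Real.mul_rpow (by positivity) (by positivity), Real.rpow_inv_rpow (by positivity) hq0.ne']
    simp only [B]
    field_simp
    ring
  have hinput : ContinuousOn (fun t => K * (1 + f t ^ q)) (Ici 0) :=
    continuousOn_const.mul (continuousOn_const.add (hf.rpow_const fun _ _ => Or.inr hq0.le))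
  have hinput0 (t : ℝ) : 0 ≤ K * (1 + f t ^ q) := by
    have := Real.rpow_nonneg (hf0 t) q
    positivity
  have hev : ∀ᶠ t in atTop, X t ≤ M + 2 * B := by
    refine eventually_le_of_deriv_le (d := 2 * B) hX hX' hinput hinput0 (fun t ht => ?_)
      (by linarith) (fun t ht => ?_) fun t ht hMX => ?_
    · exact integral_const_mul_one_add_rpow_le hq0.le hq1 hK.le
        (hf.mono fun s hs => ht.trans hs.1) (fun s _ => hf0 s) (hfS t ht)
    · nlinarith [hle t ht, Real.rpow_nonneg (hX0 t) q]
    · nlinarith [hle t ht, Real.rpow_le_rpow (by positivity) hMX hq0.le]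
  have hpow : (1 + S) ^ q ≤ 1 + S := Real.rpow_le_self_of_one_le (by linarith) hq1
  filter_upwards [hev] with t ht
  simp only [M, B] at ht
  nlinarith

end UnitWindows

section AveragedDamping

variable {V H : Type*} [NormedAddCommGroup V] [InnerProductSpace ℝ V]
  [NormedAddCommGroup H] [InnerProductSpace ℝ H] {α c : ℝ}

lemma inner_norm_rpow_smul_sub_nonneg (hα : 0 ≤ α) (x y : H) :
    0 ≤ ⟪‖x‖ ^ α • x - ‖y‖ ^ α • y, x - y⟫ := by
  have hsplit : ⟪‖x‖ ^ α • x - ‖y‖ ^ α • y, x - y⟫ =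
      (‖x‖ ^ α + ‖y‖ ^ α) / 2 * ‖x - y‖ ^ 2 +
        (‖x‖ ^ α - ‖y‖ ^ α) * (‖x‖ - ‖y‖) * (‖x‖ + ‖y‖) / 2 := by
    simp only [norm_sub_sq_real, inner_sub_left, inner_sub_right, real_inner_smul_left,
      real_inner_self_eq_norm_sq, real_inner_comm x y]
    ring
  have hmono : 0 ≤ (‖x‖ ^ α - ‖y‖ ^ α) * (‖x‖ - ‖y‖) := by
    rcases le_total ‖x‖ ‖y‖ with hxy | hxy
    · exact mul_nonneg_of_nonpos_of_nonpos
        (sub_nonpos.2 (Real.rpow_le_rpow (norm_nonneg x) hxy hα)) (sub_nonpos.2 hxy)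
    · exact mul_nonneg
        (sub_nonneg.2 (Real.rpow_le_rpow (norm_nonneg y) hxy hα)) (sub_nonneg.2 hxy)
  rw [hsplit]
  positivity

/-- The averaged damping `v ↦ c |j v|_H ^ α · ι (j v)`, where `ι w = ⟪w, j ·⟫` embeds `H` into the
dual of `V`. -/
noncomputable def averagedDamping (j : V →L[ℝ] H) (c α : ℝ) (v : V) : V →L[ℝ] ℝ :=
  (c * ‖j v‖ ^ α) • (innerSL ℝ (j v)).comp j

variable (j : V →L[ℝ] H)

lemma averagedDamping_apply (v w : V) :
    averagedDamping j c α v w = c * ‖j v‖ ^ α * ⟪j v, j w⟫ := by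
  simp [averagedDamping]

lemma continuous_averagedDamping (hα : 0 ≤ α) : Continuous (averagedDamping j c α) := by
  have hpow : Continuous fun v => ‖j v‖ ^ α := j.continuous.norm.rpow_const fun _ => Or.inr hα
  have hdual : Continuous fun v => (innerSL ℝ (j v)).comp j :=
    ((innerSL ℝ).continuous.comp j.continuous).clm_comp continuous_const
  exact (continuous_const.mul hpow).smul hdual

lemma averagedDamping_sub_apply_sub_nonneg (hα : 0 ≤ α) (hc : 0 ≤ c) (v w : V) :
    0 ≤ (averagedDamping j c α v - averagedDamping j c α w) (v - w) := by
  have heq : (averagedDamping j c α v - averagedDamping j c α w) (v - w) =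
      c * ⟪‖j v‖ ^ α • j v - ‖j w‖ ^ α • j w, j v - j w⟫ := by
    rw [sub_apply, averagedDamping_apply, averagedDamping_apply, map_sub,
      inner_sub_left, real_inner_smul_left, real_inner_smul_left]
    ring
  rw [heq]
  exact mul_nonneg hc (inner_norm_rpow_smul_sub_nonneg hα _ _)

lemma averagedDamping_apply_self (hα : α + 2 ≠ 0) (v : V) :
    averagedDamping j c α v v = c * ‖j v‖ ^ (α + 2) := by
  have hpow : ‖j v‖ ^ (α + 2) = ‖j v‖ ^ α * ‖j v‖ ^ 2 :=
    mod_cast Real.rpow_add_natCast' (n := 2) (norm_nonneg (j v)) (mod_cast hα)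
  rw [averagedDamping_apply, real_inner_self_eq_norm_sq, hpow, mul_assoc]

lemma norm_averagedDamping_le (hα : α + 1 ≠ 0) (hc : 0 ≤ c) (v : V) :
    ‖averagedDamping j c α v‖ ≤ c * ‖j‖ * ‖j v‖ ^ (α + 1) :=
  calc ‖averagedDamping j c α v‖ = c * ‖j v‖ ^ α * ‖(innerSL ℝ (j v)).comp j‖ := by
        rw [averagedDamping, norm_smul, Real.norm_of_nonneg (by positivity)]
    _ ≤ c * ‖j v‖ ^ α * (‖j v‖ * ‖j‖) := by
        gcongr
        exact ((innerSL ℝ (j v)).opNorm_comp_le j).trans_eq (by rw [innerSL_apply_norm])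
    _ = c * ‖j‖ * ‖j v‖ ^ (α + 1) := by
        rw [Real.rpow_add_one' (norm_nonneg _) hα]
        ring

end AveragedDamping

section DissipationInequality

variable {p r W : ℝ}

lemma holderConjugate_le_two (hrp : r.HolderConjugate p) (hr : 2 ≤ r) : p ≤ 2 := by
  nlinarith [hrp.sub_one_mul_conj, hrp.symm.lt]

lemma rpow_sub_one_mul_self (hW : 0 < W) (s : ℝ) : W ^ (s - 1) * W = W ^ s := by
  rw [← Real.rpow_add_one hW.ne', sub_add_cancel]

lemma rpow_half_sub_one_mul_le {n : ℝ} (hW : 0 < W) (hn : n ^ 2 ≤ W) :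
    W ^ (p / 2 - 1) * n ≤ W ^ ((p - 1) / 2) :=
  calc W ^ (p / 2 - 1) * n ≤ W ^ (p / 2 - 1) * W ^ (1 / 2 : ℝ) := by
        gcongr
        rw [← Real.sqrt_eq_rpow]
        exact Real.le_sqrt_of_sq_le hn
    _ = W ^ ((p - 1) / 2) := by
        rw [← Real.rpow_add hW]
        ring_nf

lemma rpow_sub_one_div_two_rpow (hrp : r.HolderConjugate p) (hW : 0 ≤ W) :
    (W ^ ((p - 1) / 2)) ^ r = W ^ (p / 2) := by
  rw [← Real.rpow_mul hW, div_mul_eq_mul_div, hrp.symm.sub_one_mul_conj]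

lemma exists_weighted_power_le (hrp : r.HolderConjugate p) {c : ℝ} (hc : 0 < c) :
    ∃ K : ℝ, 0 ≤ K ∧ ∀ a η θ : ℝ, 0 ≤ a → 0 ≤ η → θ ∈ Icc (1 / 2) (3 / 2) →
      θ * (2 * (η * a - c * a ^ r)) ≤ -(c / 2) * a ^ r + K * η ^ p := by
  obtain ⟨K, hK, hyoung⟩ :=
    exists_const_mul_mul_le_rpow_add_rpow hrp (b := 3) (by norm_num) (half_pos hc)
  refine ⟨K, hK, ?_⟩
  rintro a η θ ha hη ⟨hθ_ge, hθ_le⟩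
  have hinput : θ * (2 * (η * a)) ≤ 3 * (a * η) := by nlinarith [mul_nonneg hη ha]
  have hloss : c * a ^ r ≤ θ * (2 * (c * a ^ r)) := by
    nlinarith [mul_nonneg hc.le (Real.rpow_nonneg ha r)]
  linarith [hyoung a η ha hη]

lemma exists_mul_weighted_mul_le (hrp : r.HolderConjugate p) {b δ : ℝ} (hb : 0 ≤ b) (hδ : 0 < δ) :
    ∃ K : ℝ, 0 ≤ K ∧ ∀ W n y : ℝ, 0 < W → n ^ 2 ≤ W → 0 ≤ y →
      b * y * (W ^ (p / 2 - 1) * n) ≤ δ * W ^ (p / 2) + K * y ^ p := by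
  obtain ⟨K, hK, hyoung⟩ := exists_const_mul_mul_le_rpow_add_rpow hrp hb hδ
  refine ⟨K, hK, fun W n y hW hn hy => ?_⟩
  calc b * y * (W ^ (p / 2 - 1) * n) ≤ b * y * W ^ ((p - 1) / 2) := by
        gcongr
        exact rpow_half_sub_one_mul_le hW hn
    _ = b * (W ^ ((p - 1) / 2) * y) := by ring
    _ ≤ δ * (W ^ ((p - 1) / 2)) ^ r + K * y ^ p := hyoung _ y (by positivity) hy
    _ = δ * W ^ (p / 2) + K * y ^ p := by rw [rpow_sub_one_div_two_rpow hrp hW.le]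

lemma exists_weighted_virial_le (hrp : r.HolderConjugate p) (hr : 2 ≤ r) {b P : ℝ} (hb : 0 ≤ b)
    (hP : 0 ≤ P) :
    ∃ K : ℝ, 0 < K ∧ ∀ a n η : ℝ, 0 ≤ a → 0 ≤ η →
      (1 + a ^ 2 + n ^ 2) ^ (p / 2 - 1) *
          (a ^ 2 - n ^ 2 + b * a ^ (r - 1) * n + P * η * n) ≤
        -(1 / 2) * (1 + a ^ 2 + n ^ 2) ^ (p / 2) + K * (1 + a ^ r + η ^ p) := by
  obtain ⟨K₁, hK₁, hyoung_damping⟩ :=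
    exists_mul_weighted_mul_le hrp hb (δ := 1 / 4) (by norm_num)
  obtain ⟨K₂, hK₂, hyoung_forcing⟩ :=
    exists_mul_weighted_mul_le hrp hP (δ := 1 / 4) (by norm_num)
  refine ⟨3 + K₁ + K₂, by positivity, fun a n η ha hη => ?_⟩
  have har : 0 ≤ a ^ r := Real.rpow_nonneg ha r
  have hηp : 0 ≤ η ^ p := Real.rpow_nonneg hη p
  set W := 1 + a ^ 2 + n ^ 2 with hW
  have hW1 : 1 ≤ W := by nlinarith
  have hnW : n ^ 2 ≤ W := by nlinarith
  set ω := W ^ (p / 2 - 1)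
  have hω1 : ω ≤ 1 :=
    Real.rpow_le_one_of_one_le_of_nonpos hW1 (by linarith [holderConjugate_le_two hrp hr])
  have hωW : ω * W = W ^ (p / 2) := rpow_sub_one_mul_self (by linarith) _
  have hkinetic : ω * (2 * a ^ 2 + 1) ≤ 2 * a ^ r + 3 :=
    (mul_le_of_le_one_left (by positivity) hω1).trans (by linarith [sq_le_one_add_rpow hr ha])
  have hdamping : b * a ^ (r - 1) * (ω * n) ≤ 1 / 4 * W ^ (p / 2) + K₁ * a ^ r := by
    have := hyoung_damping W n (a ^ (r - 1)) (by linarith) hnW (by positivity)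
    rwa [← Real.rpow_mul ha, hrp.sub_one_mul_conj] at this
  have hforcing : P * η * (ω * n) ≤ 1 / 4 * W ^ (p / 2) + K₂ * η ^ p :=
    hyoung_forcing W n η (by linarith) hnW hη
  calc ω * (a ^ 2 - n ^ 2 + b * a ^ (r - 1) * n + P * η * n)
      = -(ω * W) + ω * (2 * a ^ 2 + 1) + b * a ^ (r - 1) * (ω * n) + P * η * (ω * n) := by
        rw [hW]
        ring
    _ ≤ -(1 / 2) * W ^ (p / 2) + (3 + (2 + K₁) * a ^ r + K₂ * η ^ p) := by linarith
    _ ≤ -(1 / 2) * W ^ (p / 2) + (3 + K₁ + K₂) * (1 + a ^ r + η ^ p) := by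
        gcongr
        nlinarith [mul_nonneg hK₁ hηp, mul_nonneg hK₂ har]

lemma exists_dissipation_constants (hrp : r.HolderConjugate p) (hr : 2 ≤ r) {c b P : ℝ}
    (hc : 0 < c) (hb : 0 ≤ b) (hP : 0 ≤ P) :
    ∃ ε K : ℝ, 0 < ε ∧ ε * P ≤ 1 / 2 ∧ 0 < K ∧ ∀ a n η θ : ℝ, 0 ≤ a → 0 ≤ η →
      θ ∈ Icc (1 / 2) (3 / 2) →
      θ * (2 * (η * a - c * a ^ r)) + ε * (1 + a ^ 2 + n ^ 2) ^ (p / 2 - 1) *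
          (a ^ 2 - n ^ 2 + b * a ^ (r - 1) * n + P * η * n) ≤
        -(ε / 2) * (1 + a ^ 2 + n ^ 2) ^ (p / 2) + K * (1 + η ^ p) := by
  obtain ⟨K₁, hK₁, hpower⟩ := exists_weighted_power_le hrp hc
  obtain ⟨K₂, hK₂, hvirial⟩ := exists_weighted_virial_le hrp hr hb hP
  set ε := min (c / 2 / K₂) (1 / 2 / (P + 1))
  have hε : 0 < ε := by positivity
  have hεK₂ : ε * K₂ ≤ c / 2 := (le_div_iff₀ hK₂).1 (min_le_left _ _)
  have hεP : ε * (P + 1) ≤ 1 / 2 := (le_div_iff₀ (by positivity)).1 (min_le_right _ _)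
  refine ⟨ε, K₁ + ε * K₂, hε, by linarith, by positivity, fun a n η θ ha hη hθ => ?_⟩
  have habsorb : ε * K₂ * a ^ r ≤ c / 2 * a ^ r := by gcongr
  linarith [hpower a η θ ha hη hθ, mul_le_mul_of_nonneg_left (hvirial a n η ha hη) hε.le]

end DissipationInequality

section StrongSolution

variable {V H : Type*} [NormedAddCommGroup V] [InnerProductSpace ℝ V]
  [NormedAddCommGroup H] [InnerProductSpace ℝ H]

/-- A damping `g` that dissipates at least `c |j v|_H ^ r` and whose dual norm grows at most like
`b |j v|_H ^ (r - 1)`. -/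
structure IsPowerDamping_s9 (j : V →L[ℝ] H) (c b r : ℝ) (g : V → V →L[ℝ] ℝ) : Prop where
  le_apply_self : ∀ v, c * ‖j v‖ ^ r ≤ g v v
  norm_le : ∀ v, ‖g v‖ ≤ b * ‖j v‖ ^ (r - 1)

lemma isPowerDamping_averagedDamping (j : V →L[ℝ] H) {α c : ℝ} (hα : 0 ≤ α) (hc : 0 ≤ c) :
    IsPowerDamping_s9 j c (c * ‖j‖) (α + 2) (averagedDamping j c α) where
  le_apply_self v := (averagedDamping_apply_self j (by positivity) v).ge
  norm_le v := by
    rw [show α + 2 - 1 = α + 1 by ring]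
    exact norm_averagedDamping_le j (by positivity) hc v

/-- Strong solutions on `[0, ∞)` of `ü + A u + g(u̇) = h`, with `u'` and `u''` standing for `u̇` and
`ü`. The equation in the dual of `V` is tested against vectors of `V`, which makes the embeddings
into the dual and the duality map `A` disappear. -/
structure IsStrongSolution (j : V →L[ℝ] H) (g : V → V →L[ℝ] ℝ) (h : ℝ → H) (u u' : ℝ → V)
    (u'' : ℝ → H) : Prop where
  hasDerivWithinAt : ∀ t ∈ Ici (0 : ℝ), HasDerivWithinAt u (u' t) (Ici 0) t
  hasDerivWithinAt_velocity :
    ∀ t ∈ Ici (0 : ℝ), HasDerivWithinAt (fun s => j (u' s)) (u'' t) (Ici 0) t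
  equation : ∀ t ∈ Ici (0 : ℝ), ∀ w, ⟪u'' t, j w⟫ + ⟪u t, w⟫ + g (u' t) w = ⟪h t, j w⟫

/-- Twice the energy of the state `(x, v)`, shifted by `1` so that its real powers are smooth. -/
def shiftedEnergy (j : V →L[ℝ] H) (x v : V) : ℝ := 1 + ‖j v‖ ^ 2 + ‖x‖ ^ 2

/-- The Lyapunov function: the shifted energy `W` perturbed by `⟪j v, j x⟫`, whose derivative along
the flow recovers the potential energy. For a damping of order `r`, with conjugate exponent `p`, the
weight `ε W ^ (p / 2 - 1)` is what lets Young's inequality absorb the damping's share of that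
derivative into the dissipated power `c |j v|_H ^ r`. -/
noncomputable def lyapunov (j : V →L[ℝ] H) (p ε : ℝ) (x v : V) : ℝ :=
  shiftedEnergy j x v + ε * shiftedEnergy j x v ^ (p / 2 - 1) * ⟪j v, j x⟫

variable {j : V →L[ℝ] H} {p r ε c b : ℝ} {g : V → V →L[ℝ] ℝ} {h : ℝ → H} {u u' : ℝ → V}
  {u'' : ℝ → H}

lemma one_le_shiftedEnergy (j : V →L[ℝ] H) (x v : V) : 1 ≤ shiftedEnergy j x v := by
  unfold shiftedEnergy
  nlinarith [sq_nonneg ‖j v‖, sq_nonneg ‖x‖]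

lemma abs_inner_map_le_mul_shiftedEnergy (j : V →L[ℝ] H) (x v : V) :
    |⟪j v, j x⟫| ≤ ‖j‖ * shiftedEnergy j x v :=
  calc |⟪j v, j x⟫| ≤ ‖j v‖ * (‖j‖ * ‖x‖) :=
        (abs_real_inner_le_norm _ _).trans (by gcongr; exact j.le_opNorm x)
    _ = ‖j‖ * (‖j v‖ * ‖x‖) := by ring
    _ ≤ ‖j‖ * shiftedEnergy j x v := by
        gcongr
        unfold shiftedEnergy
        nlinarith [two_mul_le_add_sq ‖j v‖ ‖x‖, sq_nonneg ‖j v‖, sq_nonneg ‖x‖]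

lemma abs_mul_rpow_mul_inner_le (hp : p ≤ 2) (hε : 0 ≤ ε) (hεj : ε * ‖j‖ ≤ 1 / 2) (x v : V) :
    |ε * shiftedEnergy j x v ^ (p / 2 - 1) * ⟪j v, j x⟫| ≤ shiftedEnergy j x v / 2 := by
  have hW1 := one_le_shiftedEnergy j x v
  have hinner := abs_inner_map_le_mul_shiftedEnergy j x v
  set W := shiftedEnergy j x v
  have hω : W ^ (p / 2 - 1) ≤ 1 := Real.rpow_le_one_of_one_le_of_nonpos hW1 (by linarith)
  calc |ε * W ^ (p / 2 - 1) * ⟪j v, j x⟫| = ε * W ^ (p / 2 - 1) * |⟪j v, j x⟫| := by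
        rw [abs_mul, abs_of_nonneg (by positivity)]
    _ ≤ ε * 1 * (‖j‖ * W) := by gcongr
    _ = ε * ‖j‖ * W := by ring
    _ ≤ 1 / 2 * W := by gcongr
    _ = W / 2 := by ring

lemma shiftedEnergy_le_two_mul_lyapunov (hp : p ≤ 2) (hε : 0 ≤ ε) (hεj : ε * ‖j‖ ≤ 1 / 2)
    (x v : V) : shiftedEnergy j x v ≤ 2 * lyapunov j p ε x v := by
  unfold lyapunov
  linarith [neg_le_of_abs_le (abs_mul_rpow_mul_inner_le hp hε hεj x v)]

lemma lyapunov_le_two_mul_shiftedEnergy (hp : p ≤ 2) (hε : 0 ≤ ε) (hεj : ε * ‖j‖ ≤ 1 / 2)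
    (x v : V) : lyapunov j p ε x v ≤ 2 * shiftedEnergy j x v := by
  unfold lyapunov
  linarith [le_of_abs_le (abs_mul_rpow_mul_inner_le hp hε hεj x v), one_le_shiftedEnergy j x v]

lemma lyapunov_rpow_le_two_mul {s : ℝ} (hs0 : 0 ≤ s) (hs1 : s ≤ 1) (hp : p ≤ 2) (hε : 0 ≤ ε)
    (hεj : ε * ‖j‖ ≤ 1 / 2) (x v : V) :
    lyapunov j p ε x v ^ s ≤ 2 * shiftedEnergy j x v ^ s := by
  have hW : 0 ≤ shiftedEnergy j x v := zero_le_one.trans (one_le_shiftedEnergy j x v)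
  have hΦ : 0 ≤ lyapunov j p ε x v := by
    linarith [shiftedEnergy_le_two_mul_lyapunov hp hε hεj x v]
  calc lyapunov j p ε x v ^ s ≤ (2 * shiftedEnergy j x v) ^ s :=
        Real.rpow_le_rpow hΦ (lyapunov_le_two_mul_shiftedEnergy hp hε hεj x v) hs0
    _ = 2 ^ s * shiftedEnergy j x v ^ s := Real.mul_rpow (by norm_num) hW
    _ ≤ 2 * shiftedEnergy j x v ^ s := by
        gcongr
        exact Real.rpow_le_self_of_one_le (by norm_num) hs1

/-- The factor multiplying the derivative of the shifted energy in the derivative of `lyapunov`. -/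
noncomputable def energyFactor (j : V →L[ℝ] H) (p ε : ℝ) (x v : V) : ℝ :=
  1 + ε * (p / 2 - 1) * shiftedEnergy j x v ^ (p / 2 - 2) * ⟪j v, j x⟫

lemma energyFactor_mem_Icc (hp0 : 0 ≤ p) (hp : p ≤ 2) (hε : 0 ≤ ε) (hεj : ε * ‖j‖ ≤ 1 / 2)
    (x v : V) : energyFactor j p ε x v ∈ Icc (1 / 2) (3 / 2) := by
  have hW1 := one_le_shiftedEnergy j x v
  have hcross := abs_mul_rpow_mul_inner_le hp hε hεj x v
  unfold energyFactor
  set W := shiftedEnergy j x v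
  have hW0 : 0 < W := by linarith
  have hdiv : ε * (p / 2 - 1) * W ^ (p / 2 - 2) * ⟪j v, j x⟫ =
      (p / 2 - 1) * (ε * W ^ (p / 2 - 1) * ⟪j v, j x⟫ / W) := by
    rw [show p / 2 - 2 = p / 2 - 1 - 1 by ring, Real.rpow_sub_one hW0.ne' (p / 2 - 1)]
    ring
  have hbound : |ε * (p / 2 - 1) * W ^ (p / 2 - 2) * ⟪j v, j x⟫| ≤ 1 / 2 := by
    calc |ε * (p / 2 - 1) * W ^ (p / 2 - 2) * ⟪j v, j x⟫|
        = |p / 2 - 1| * (|ε * W ^ (p / 2 - 1) * ⟪j v, j x⟫| / W) := by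
          rw [hdiv, abs_mul, abs_div, abs_of_pos hW0]
      _ ≤ 1 * (W / 2 / W) := by
          gcongr
          exact abs_le.2 ⟨by linarith, by linarith⟩
      _ = 1 / 2 := by field_simp
  obtain ⟨hge, hle⟩ := abs_le.1 hbound
  constructor <;> linarith

lemma hasDerivAt_shiftedEnergy {t : ℝ} {y : H} (hu : HasDerivAt u (u' t) t)
    (hu' : HasDerivAt (fun s => j (u' s)) y t) :
    HasDerivAt (fun s => shiftedEnergy j (u s) (u' s)) (2 * (⟪y, j (u' t)⟫ + ⟪u t, u' t⟫)) t := by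
  refine ((hu'.norm_sq.const_add 1).add hu.norm_sq).congr_deriv ?_
  rw [real_inner_comm y]
  ring

lemma hasDerivAt_lyapunov {t : ℝ} {y : H} (hu : HasDerivAt u (u' t) t)
    (hu' : HasDerivAt (fun s => j (u' s)) y t) :
    HasDerivAt (fun s => lyapunov j p ε (u s) (u' s))
      (energyFactor j p ε (u t) (u' t) * (2 * (⟪y, j (u' t)⟫ + ⟪u t, u' t⟫)) +
        ε * shiftedEnergy j (u t) (u' t) ^ (p / 2 - 1) *
          (‖j (u' t)‖ ^ 2 + ⟪y, j (u t)⟫)) t := by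
  have hW := hasDerivAt_shiftedEnergy hu hu'
  have hW0 : shiftedEnergy j (u t) (u' t) ≠ 0 :=
    (zero_lt_one.trans_le (one_le_shiftedEnergy j _ _)).ne'
  have hcross : HasDerivAt (fun s => ⟪j (u' s), j (u s)⟫)
      (⟪j (u' t), j (u' t)⟫ + ⟪y, j (u t)⟫) t :=
    hu'.inner ℝ (j.hasFDerivAt.comp_hasDerivAt t hu)
  refine (hW.add (((hW.rpow_const (p := p / 2 - 1) (Or.inl hW0)).const_mul ε).mul
    hcross)).congr_deriv ?_
  rw [real_inner_self_eq_norm_sq, show p / 2 - 1 - 1 = p / 2 - 2 by ring, energyFactor]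
  ring

namespace IsStrongSolution

variable {t : ℝ}

lemma hasDerivAt (sol : IsStrongSolution j g h u u' u'') (ht : 0 < t) : HasDerivAt u (u' t) t :=
  (sol.hasDerivWithinAt t ht.le).hasDerivAt (Ici_mem_nhds ht)

lemma hasDerivAt_velocity (sol : IsStrongSolution j g h u u' u'') (ht : 0 < t) :
    HasDerivAt (fun s => j (u' s)) (u'' t) t :=
  (sol.hasDerivWithinAt_velocity t ht.le).hasDerivAt (Ici_mem_nhds ht)

lemma continuousOn_lyapunov (sol : IsStrongSolution j g h u u' u'') :
    ContinuousOn (fun t => lyapunov j p ε (u t) (u' t)) (Ici 0) := by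
  have hu : ContinuousOn u (Ici 0) := fun t ht => (sol.hasDerivWithinAt t ht).continuousWithinAt
  have hv : ContinuousOn (fun t => j (u' t)) (Ici 0) := fun t ht =>
    (sol.hasDerivWithinAt_velocity t ht).continuousWithinAt
  have hW : ContinuousOn (fun t => shiftedEnergy j (u t) (u' t)) (Ici 0) :=
    (continuousOn_const.add (hv.norm.pow 2)).add (hu.norm.pow 2)
  have hω : ContinuousOn (fun t => shiftedEnergy j (u t) (u' t) ^ (p / 2 - 1)) (Ici 0) :=
    hW.rpow_const fun t _ => Or.inl (zero_lt_one.trans_le (one_le_shiftedEnergy j _ _)).ne'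
  exact hW.add ((continuousOn_const.mul hω).mul (hv.inner (j.continuous.comp_continuousOn hu)))

lemma power_le (sol : IsStrongSolution j g h u u' u'') (hg : IsPowerDamping_s9 j c b r g)
    (ht : 0 ≤ t) :
    ⟪u'' t, j (u' t)⟫ + ⟪u t, u' t⟫ ≤ ‖h t‖ * ‖j (u' t)‖ - c * ‖j (u' t)‖ ^ r := by
  linarith [sol.equation t ht (u' t), hg.le_apply_self (u' t), real_inner_le_norm (h t) (j (u' t))]

lemma virial_le (sol : IsStrongSolution j g h u u' u'') (hg : IsPowerDamping_s9 j c b r g)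
    (ht : 0 ≤ t) :
    ‖j (u' t)‖ ^ 2 + ⟪u'' t, j (u t)⟫ ≤ ‖j (u' t)‖ ^ 2 - ‖u t‖ ^ 2 +
      b * ‖j (u' t)‖ ^ (r - 1) * ‖u t‖ + ‖j‖ * ‖h t‖ * ‖u t‖ := by
  have heq := sol.equation t ht (u t)
  rw [real_inner_self_eq_norm_sq] at heq
  have hdamping : -g (u' t) (u t) ≤ b * ‖j (u' t)‖ ^ (r - 1) * ‖u t‖ :=
    (neg_le_abs _).trans ((g (u' t)).le_of_opNorm_le (hg.norm_le _) _)
  have hforcing : ⟪h t, j (u t)⟫ ≤ ‖j‖ * ‖h t‖ * ‖u t‖ :=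
    calc ⟪h t, j (u t)⟫ ≤ ‖h t‖ * (‖j‖ * ‖u t‖) :=
          (real_inner_le_norm _ _).trans (by gcongr; exact j.le_opNorm _)
      _ = ‖j‖ * ‖h t‖ * ‖u t‖ := by ring
  linarith

end IsStrongSolution

lemma exists_deriv_lyapunov_le (j : V →L[ℝ] H) (hrp : r.HolderConjugate p) (hr : 2 ≤ r)
    (hc : 0 < c) (hb : 0 ≤ b) :
    ∃ ε δ K : ℝ, 0 ≤ ε ∧ ε * ‖j‖ ≤ 1 / 2 ∧ 0 < δ ∧ 0 < K ∧
      ∀ (g : V → V →L[ℝ] ℝ) (h : ℝ → H) (u u' : ℝ → V) (u'' : ℝ → H),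
        IsPowerDamping_s9 j c b r g → IsStrongSolution j g h u u' u'' → ∀ t, 0 < t →
        deriv (fun s => lyapunov j p ε (u s) (u' s)) t ≤
          -δ * lyapunov j p ε (u t) (u' t) ^ (p / 2) + K * (1 + (‖h t‖ ^ 2) ^ (p / 2)) := by
  obtain ⟨ε, K, hε, hεj, hK, hdissip⟩ :=
    exists_dissipation_constants hrp hr hc hb (norm_nonneg j)
  refine ⟨ε, ε / 4, K, hε.le, hεj, by positivity, hK, ?_⟩
  intro g h u u' u'' hg sol t ht
  have hp0 : 0 ≤ p := hrp.symm.nonneg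
  have hp2 : p ≤ 2 := holderConjugate_le_two hrp hr
  have hθ := energyFactor_mem_Icc hp0 hp2 hε.le hεj (u t) (u' t)
  have hcompare := lyapunov_rpow_le_two_mul (s := p / 2) (by linarith) (by linarith) hp2 hε.le hεj
    (u t) (u' t)
  have hW : 0 < shiftedEnergy j (u t) (u' t) := zero_lt_one.trans_le (one_le_shiftedEnergy j _ _)
  have hηp : (‖h t‖ ^ 2) ^ (p / 2) = ‖h t‖ ^ p := by
    rw [← Real.rpow_natCast_mul (norm_nonneg _), Nat.cast_ofNat, mul_div_cancel₀ p two_ne_zero]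
  rw [(hasDerivAt_lyapunov (sol.hasDerivAt ht) (sol.hasDerivAt_velocity ht)).deriv, hηp]
  calc _ ≤ energyFactor j p ε (u t) (u' t) *
          (2 * (‖h t‖ * ‖j (u' t)‖ - c * ‖j (u' t)‖ ^ r)) +
        ε * shiftedEnergy j (u t) (u' t) ^ (p / 2 - 1) * (‖j (u' t)‖ ^ 2 - ‖u t‖ ^ 2 +
          b * ‖j (u' t)‖ ^ (r - 1) * ‖u t‖ + ‖j‖ * ‖h t‖ * ‖u t‖) :=
        add_le_add
          (mul_le_mul_of_nonneg_left
            (mul_le_mul_of_nonneg_left (sol.power_le hg ht.le) zero_le_two) (by linarith [hθ.1]))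
          (mul_le_mul_of_nonneg_left (sol.virial_le hg ht.le) (by positivity))
    _ ≤ -(ε / 2) * shiftedEnergy j (u t) (u' t) ^ (p / 2) + K * (1 + ‖h t‖ ^ p) :=
        hdissip _ _ _ _ (norm_nonneg _) (norm_nonneg _) hθ
    _ ≤ -(ε / 4) * lyapunov j p ε (u t) (u' t) ^ (p / 2) + K * (1 + ‖h t‖ ^ p) := by
        nlinarith

lemma exists_eventually_energy_le (j : V →L[ℝ] H) (hr : 2 ≤ r) (hc : 0 < c) (hb : 0 ≤ b) :
    ∃ K : ℝ, 0 < K ∧ ∀ (g : V → V →L[ℝ] ℝ) (h : ℝ → H) (S : ℝ) (u u' : ℝ → V) (u'' : ℝ → H),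
      IsPowerDamping_s9 j c b r g → ContinuousOn h (Ici 0) →
      (∀ t, 0 ≤ t → ∫ s in t..t + 1, ‖h s‖ ^ 2 ≤ S) → IsStrongSolution j g h u u' u'' →
      ∀ᶠ t in atTop, ‖j (u' t)‖ ^ 2 + ‖u t‖ ^ 2 ≤ K * (1 + S) := by
  have hrp : r.HolderConjugate r.conjExponent := .conjExponent (by linarith)
  set p := r.conjExponent
  have hp2 : p ≤ 2 := holderConjugate_le_two hrp hr
  obtain ⟨ε, δ, K, hε, hεj, hδ, hK, hderiv⟩ := exists_deriv_lyapunov_le j hrp hr hc hb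
  obtain ⟨C, hC, hbound⟩ := exists_eventually_le_of_deriv_le_rpow (q := p / 2)
    (half_pos hrp.symm.pos) (by linarith) hδ hK
  refine ⟨2 * C, by positivity, fun g h S u u' u'' hg hh hS sol => ?_⟩
  have hW_le (t : ℝ) := shiftedEnergy_le_two_mul_lyapunov hp2 hε hεj (u t) (u' t)
  filter_upwards [hbound (fun t => lyapunov j p ε (u t) (u' t)) (fun t => ‖h t‖ ^ 2) S
    (fun t => by linarith [hW_le t, one_le_shiftedEnergy j (u t) (u' t)])
    sol.continuousOn_lyapunov
    (fun t ht => (hasDerivAt_lyapunov (sol.hasDerivAt ht)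
      (sol.hasDerivAt_velocity ht)).differentiableAt)
    (fun t => by positivity) (hh.norm.pow 2) hS (hderiv g h u u' u'' hg sol)] with t ht
  have hW := hW_le t
  rw [shiftedEnergy] at hW
  linarith

lemma exists_limsup_energy_le (j : V →L[ℝ] H) (hr : 2 ≤ r) (hc : 0 < c) (hb : 0 ≤ b) :
    ∃ K : ℝ, 0 < K ∧ ∀ (g : V → V →L[ℝ] ℝ) (h : ℝ → H) (u u' : ℝ → V) (u'' : ℝ → H),
      IsPowerDamping_s9 j c b r g → ContinuousOn h (Ici 0) →
      BddAbove {x : ℝ | ∃ t : ℝ, 0 ≤ t ∧ x = ∫ s in t..(t + 1), ‖h s‖ ^ 2} →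
      IsStrongSolution j g h u u' u'' →
      limsup (fun t : ℝ => ‖j (u' t)‖ ^ 2 + ‖u t‖ ^ 2) atTop ≤
        K * (1 + Real.sqrt
          (sSup {x : ℝ | ∃ t : ℝ, 0 ≤ t ∧ x = ∫ s in t..(t + 1), ‖h s‖ ^ 2}) ^ 2) := by
  obtain ⟨K, hK, hev⟩ := exists_eventually_energy_le j hr hc hb
  refine ⟨K, hK, fun g h u u' u'' hg hh hbdd sol => ?_⟩
  have hS_nonneg : 0 ≤ sSup {x : ℝ | ∃ t : ℝ, 0 ≤ t ∧ x = ∫ s in t..(t + 1), ‖h s‖ ^ 2} := by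
    refine Real.sSup_nonneg ?_
    rintro _ ⟨t, -, rfl⟩
    exact integral_nonneg (by linarith) fun s _ => by positivity
  rw [Real.sq_sqrt hS_nonneg]
  exact limsup_le_of_le (isCoboundedUnder_le_of_le atTop (x := 0) fun t => by positivity)
    (hev g h _ u u' u'' hg hh (fun t ht => le_csSup hbdd ⟨t, ht, rfl⟩) sol)

end StrongSolution

theorem stmt_9_general
    {V H : Type*} [NormedAddCommGroup V] [InnerProductSpace ℝ V]
    [NormedAddCommGroup H] [InnerProductSpace ℝ H]
    (j : V →L[ℝ] H) (ι : H → (V →L[ℝ] ℝ)) (hι : ∀ (w : H) (v : V), ι w v = ⟪w, j v⟫)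
    (A : V → (V →L[ℝ] ℝ)) (hA : ∀ u v : V, A u v = ⟪u, v⟫)
    (α : ℝ) (hα : 0 ≤ α) (c : ℝ) (hc : 0 < c)
    (g : V → (V →L[ℝ] ℝ)) (hg_def : ∀ v : V, g v = (c * ‖j v‖ ^ α) • ι (j v)) :
    Continuous g ∧
    (∀ v w : V, (g v - g w) (v - w) ≥ 0) ∧
    (∀ v : V, g v v = c * ‖j v‖ ^ (α + 2)) ∧
    (∀ v : V, ‖g v‖ ≤ c * ‖j‖ * ‖j v‖ ^ (α + 1)) ∧
    ∃ K' : ℝ, 0 < K' ∧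
      ∀ h : ℝ → H, ContinuousOn h (Ici 0) →
        BddAbove {x : ℝ | ∃ t : ℝ, 0 ≤ t ∧ x = ∫ s in t..(t + 1), ‖h s‖ ^ 2} →
        ∀ (u u' : ℝ → V) (u'' : ℝ → H),
          (∀ t ∈ Ici (0 : ℝ), HasDerivWithinAt u (u' t) (Ici 0) t) →
          (∀ t ∈ Ici (0 : ℝ), HasDerivWithinAt (fun s => j (u' s)) (u'' t) (Ici 0) t) →
          (∀ t ∈ Ici (0 : ℝ), ι (u'' t) + A (u t) + g (u' t) = ι (h t)) →
          limsup (fun t : ℝ => ‖j (u' t)‖ ^ 2 + ‖u t‖ ^ 2) atTop ≤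
            K' * (1 + Real.sqrt
              (sSup {x : ℝ | ∃ t : ℝ, 0 ≤ t ∧ x = ∫ s in t..(t + 1), ‖h s‖ ^ 2}) ^ 2) := by
  obtain rfl : g = averagedDamping j c α := by
    ext v w
    simp [hg_def, averagedDamping_apply, hι]
  obtain ⟨K, hK, hbound⟩ := exists_limsup_energy_le j (r := α + 2) (by linarith) hc
    (mul_nonneg hc.le (norm_nonneg j))
  refine ⟨continuous_averagedDamping j hα, averagedDamping_sub_apply_sub_nonneg j hα hc.le,
    averagedDamping_apply_self j (by positivity), norm_averagedDamping_le j (by positivity) hc.le,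
    K, hK, fun h hh hbdd u u' u'' hu hu' heq => ?_⟩
  refine hbound _ h u u' u'' (isPowerDamping_averagedDamping j hα hc.le) hh hbdd
    ⟨hu, hu', fun t ht w => ?_⟩
  simpa [hι, hA] using DFunLike.congr_fun (heq t ht) w

/-- The averaged damping `g(v) = c |j v|^α ι(j v)` (Example 2,
with `Z = H`) is continuous and monotone, satisfies
`⟨g(v), v⟩ = c |j v|^{α+2}` and `‖g(v)‖_{V'} ≤ c ‖j‖ |j v|^{α+1}`, and the
ultimate bound of the energy of any strong solution is quadratic in the
`S²`-norm of the forcing term. -/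
theorem stmt_9
    {V H : Type*}
    [NormedAddCommGroup V] [InnerProductSpace ℝ V] [CompleteSpace V]
    [NormedAddCommGroup H] [InnerProductSpace ℝ H] [CompleteSpace H]
    (j : V →L[ℝ] H) (hj_inj : Function.Injective j) (hj_dense : DenseRange j)
    (ι : H → (V →L[ℝ] ℝ)) (hι : ∀ (w : H) (v : V), ι w v = ⟪w, j v⟫)
    (A : V → (V →L[ℝ] ℝ)) (hA : ∀ u v : V, A u v = ⟪u, v⟫)
    (α : ℝ) (hα : 0 ≤ α) (c : ℝ) (hc : 0 < c)
    (g : V → (V →L[ℝ] ℝ))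
    (hg_def : ∀ v : V, g v = (c * ‖j v‖ ^ α) • ι (j v)) :
    Continuous g ∧
    (∀ v w : V, (g v - g w) (v - w) ≥ 0) ∧
    (∀ v : V, g v v = c * ‖j v‖ ^ (α + 2)) ∧
    (∀ v : V, ‖g v‖ ≤ c * ‖j‖ * ‖j v‖ ^ (α + 1)) ∧
    ∃ K' : ℝ, 0 < K' ∧
      ∀ h : ℝ → H, ContinuousOn h (Ici 0) →
        BddAbove {x : ℝ | ∃ t : ℝ, 0 ≤ t ∧ x = ∫ s in t..(t + 1), ‖h s‖ ^ 2} →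
        ∀ (u u' : ℝ → V) (u'' : ℝ → H),
          (∀ t ∈ Ici (0 : ℝ), HasDerivWithinAt u (u' t) (Ici 0) t) →
          ContinuousOn u' (Ici 0) →
          (∀ t ∈ Ici (0 : ℝ), HasDerivWithinAt (fun s => j (u' s)) (u'' t) (Ici 0) t) →
          ContinuousOn u'' (Ici 0) →
          (∀ t ∈ Ici (0 : ℝ), ι (u'' t) + A (u t) + g (u' t) = ι (h t)) →
          limsup (fun t : ℝ => ‖j (u' t)‖ ^ 2 + ‖u t‖ ^ 2) atTop ≤
            K' * (1 + Real.sqrt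
              (sSup {x : ℝ | ∃ t : ℝ, 0 ≤ t ∧ x = ∫ s in t..(t + 1), ‖h s‖ ^ 2}) ^ 2) := by
  obtain ⟨hcont, hmono, hself, hnorm, K', hK', hbound⟩ :=
    stmt_9_general j ι hι A hA α hα c hc g hg_def
  exact ⟨hcont, hmono, hself, hnorm, K', hK', fun h hh hbdd u u' u'' hu _ hu' _ =>
    hbound h hh hbdd u u' u'' hu hu'⟩
end
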